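/- The natural homomorphism from PΓU(6,4) to the group Aut(P_X, ν_P) of permutations of the 891 planes of the Fermat cubic fourfold preserving the intersection pairing ν_P(Π,Π′) = Π·Π′ is an isomorphism; in particular |Aut(P_X, ν_P)| = 6·9196830720. -/

import Mathlib

open scoped BigOperators

/-- The field `F₄`. -/
abbrev F4 : Type := GaloisField 2 2

/-- The planes of the Fermat cubic fourfold `X : x₁³+⋯+x₆³ = 0`; all 891 of
them are defined over `F₄`, so they are taken as 3-dimensional `F₄`-subspaces
of `F₄⁶`. -/
def FermatPlane : Type :=
  {P : Submodule F4 (Fin 6 → F4) //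
    Module.finrank F4 ↥P = 3 ∧ ∀ x ∈ P, ∑ i, x i ^ 3 = 0}

/-- The `F₄`-rational points of `X`, as 1-dimensional subspaces of `F₄⁶`. -/
def FermatPoint : Type :=
  {p : Submodule F4 (Fin 6 → F4) //
    Module.finrank F4 ↥p = 1 ∧ ∀ x ∈ p, ∑ i, x i ^ 3 = 0}

/-- The intersection pairing `ν_P(Π,Π′) = (1−(−2)^(dim(Π∩Π′)+1))/3`, in terms
of the linear dimension `d = dim(Π∩Π′)+1`. -/
def icNum (d : ℕ) : ℚ := (1 - (-2 : ℚ) ^ d) / 3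

/-- A permutation of the planes preserving the pairing `ν_P`. -/
def PreservesNuP (σ : Equiv.Perm FermatPlane) : Prop :=
  ∀ P P' : FermatPlane,
    icNum (Module.finrank F4 ↥((σ P).val ⊓ (σ P').val))
      = icNum (Module.finrank F4 ↥(P.val ⊓ P'.val))

/-- A semilinear automorphism of `F₄⁶` (an element of `ΓL(6,4)`) preserving
the Fermat cubic; these represent exactly the elements of `PΓU(6,4)`. -/
def IsGammaU (φ : F4 ≃+* F4) (g : (Fin 6 → F4) ≃ (Fin 6 → F4)) : Prop :=
  (∀ x y, g (x + y) = g x + g y) ∧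
  (∀ (c : F4) (x), g (c • x) = φ c • g x) ∧
  (∀ x : Fin 6 → F4, ∑ i, x i ^ 3 = 0 → ∑ i, g x i ^ 3 = 0)

/-!
The Fermat cubic `∑ xᵢ³` is the norm `𝔥 x x` of the hermitian form `𝔥 x y = ∑ xᵢ² yᵢ`, so the
planes of `X` are the maximal totally isotropic subspaces of `F₄⁶`.

*Surjectivity.* The pairing `ν_P` determines the dimension of the intersection of two planes, and
these dimensions determine the points of `X`: a point is the common center of two pairs of planes,
each pair meeting in that point and each plane of one pair meeting each plane of the other in a
line. Hence a permutation `σ` preserving `ν_P` permutes the points of `X`, respecting incidence with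
planes and orthogonality. It carries the points of a hyperbolic frame `eᵢ, fᵢ` to those of another
one; after rescaling, and after the choice of a field automorphism, a semilinear isometry agrees
with `σ` on this frame and on `[e₀ + e₁]`, `[e₀ + e₂]`, `[e₀ + w e₁]`, where `w` generates `F₄`. The
quotient of the two fixes these points. Taking orthogonal complements, it fixes all points of the
planes `⟨eᵢ⟩` and `⟨fᵢ⟩`, and then all points of `X`, so it is the identity.

*Order.* A semilinear isometry fixing all planes fixes all isotropic points, so it is one of the
three homotheties. A semilinear isometry is determined by its field automorphism and an orthonormal
basis, and these bases are counted by adding one unit vector at a time.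
-/

/-! ### The field with four elements -/

namespace F4

lemma natCard : Nat.card F4 = 4 := by
  simpa using GaloisField.card 2 2 two_ne_zero

lemma finrank_eq_of_natCard_eq {V W : Type*} [AddCommGroup V] [Module F4 V] [Module.Finite F4 V]
    [AddCommGroup W] [Module F4 W] [Module.Finite F4 W] (h : Nat.card V = Nat.card W) :
    Module.finrank F4 V = Module.finrank F4 W := by
  rw [Module.natCard_eq_pow_finrank (K := F4) (V := V),
    Module.natCard_eq_pow_finrank (K := F4) (V := W), natCard] at h
  exact Nat.pow_right_injective (by norm_num) h

lemma pow_four (a : F4) : a ^ 4 = a := by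
  have := Fintype.ofFinite F4
  simpa only [← Nat.card_eq_fintype_card, natCard] using FiniteField.pow_card a

lemma pow_three {a : F4} (ha : a ≠ 0) : a ^ 3 = 1 :=
  mul_right_cancel₀ ha (by rw [← pow_succ, pow_four, one_mul])

lemma sq_add_self_add_one {w : F4} (h0 : w ≠ 0) (h1 : w ≠ 1) : w ^ 2 + w + 1 = 0 := by
  have := pow_three h0
  grind

lemma eq_or_eq_sq {w d : F4} (hw0 : w ≠ 0) (hw1 : w ≠ 1) (hd0 : d ≠ 0) (hd1 : d ≠ 1) :
    d = w ∨ d = w ^ 2 := by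
  have := sq_add_self_add_one hw0 hw1
  have := sq_add_self_add_one hd0 hd1
  grind

lemma exists_ne_zero_ne_one : ∃ w : F4, w ≠ 0 ∧ w ≠ 1 := by
  have := Fintype.ofFinite F4
  obtain ⟨a, b, c, hab, hac, hbc⟩ := Fintype.two_lt_card_iff.1
    (show 2 < Fintype.card F4 by rw [← Nat.card_eq_fintype_card, natCard]; norm_num)
  by_contra! h
  have eq_zero_or_one (w : F4) : w = 0 ∨ w = 1 := or_iff_not_imp_left.2 (h w)
  rcases eq_zero_or_one a, eq_zero_or_one b, eq_zero_or_one c with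
    ⟨rfl | rfl, rfl | rfl, rfl | rfl⟩ <;> simp_all

lemma exists_ringAut_apply_eq {w d : F4} (hw0 : w ≠ 0) (hw1 : w ≠ 1) (hd0 : d ≠ 0)
    (hd1 : d ≠ 1) : ∃ φ : RingAut F4, φ w = d := by
  rcases eq_or_eq_sq hw0 hw1 hd0 hd1 with rfl | rfl
  · exact ⟨1, rfl⟩
  · exact ⟨frobeniusEquiv F4 2, rfl⟩

lemma natCard_ringAut : Nat.card (RingAut F4) = 2 := by
  let e : RingAut F4 ≃ Gal(F4/ZMod 2) :=
    { toFun φ := AlgEquiv.ofRingEquiv (f := φ) fun a => RingHom.congr_fun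
        (RingHom.ext_zmod ((φ : F4 →+* F4).comp (algebraMap (ZMod 2) F4)) (algebraMap _ _)) a
      invFun φ := φ.toRingEquiv
      left_inv _ := rfl
      right_inv _ := rfl }
  rw [Nat.card_congr e, IsGalois.card_aut_eq_finrank, GaloisField.finrank 2 two_ne_zero]

end F4

/-! ### The hermitian form -/

/-- The hermitian form `𝔥 x y = ∑ xᵢ² yᵢ` over `F₄`, where `a ↦ a²` is the nontrivial
automorphism. Its diagonal values are `∑ xᵢ³`, so the Fermat cubic is its isotropic cone. -/
noncomputable def hermitianForm {ι : Type*} [Fintype ι] :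
    (ι → F4) →ₛₗ[frobenius F4 2] (ι → F4) →ₗ[F4] F4 :=
  LinearMap.mk₂'ₛₗ (frobenius F4 2) (RingHom.id F4) (fun x y => ∑ i, x i ^ 2 * y i)
    (fun x x' y => by simp [CharTwo.add_sq, add_mul, Finset.sum_add_distrib])
    (fun c x y => by simp [mul_pow, mul_assoc, Finset.mul_sum, frobenius_def])
    (fun x y y' => by simp [mul_add, Finset.sum_add_distrib])
    (fun c x y => by simp [mul_left_comm, Finset.mul_sum])

local notation "𝔥" => hermitianForm

section Form

variable {ι : Type*} [Fintype ι]

lemma hermitianForm_apply (x y : ι → F4) : 𝔥 x y = ∑ i, x i ^ 2 * y i := rfl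

lemma hermitianForm_self (x : ι → F4) : 𝔥 x x = ∑ i, x i ^ 3 := by
  simp only [hermitianForm_apply, pow_succ (_ : F4) 2]

lemma hermitianForm_smul_left (c : F4) (x y : ι → F4) : 𝔥 (c • x) y = c ^ 2 * 𝔥 x y := by
  simp [frobenius_def]

lemma hermitianForm_comm (x y : ι → F4) : 𝔥 x y = 𝔥 y x ^ 2 := by
  rw [hermitianForm_apply, hermitianForm_apply, CharTwo.sum_sq]
  refine Finset.sum_congr rfl fun i _ => ?_
  rw [mul_pow, ← pow_mul, F4.pow_four, mul_comm]

lemma hermitianForm_isRefl : (hermitianForm (ι := ι)).IsRefl := fun x y h => by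
  rw [hermitianForm_comm, h, zero_pow two_ne_zero]

lemma hermitianForm_eq_zero_comm {x y : ι → F4} : 𝔥 x y = 0 ↔ 𝔥 y x = 0 :=
  hermitianForm_isRefl.eq_iff

lemma hermitianForm_single_left [DecidableEq ι] (i : ι) (x : ι → F4) :
    𝔥 (Pi.single i 1) x = x i := by
  simp [hermitianForm_apply, Pi.single_apply, ite_pow]

lemma hermitianForm_injective : Function.Injective (hermitianForm (ι := ι)) := by
  classical
  refine (injective_iff_map_eq_zero _).2 fun x hx => funext fun i => ?_
  rw [← hermitianForm_single_left i x, Pi.zero_apply, hermitianForm_eq_zero_comm, hx,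
    LinearMap.zero_apply]

lemma exists_hermitianForm_eq_one {x : ι → F4} (hx : x ≠ 0) : ∃ y, 𝔥 x y = 1 := by
  obtain ⟨y, hy⟩ : ∃ y, 𝔥 x y ≠ 0 := by
    by_contra! h
    exact hx (hermitianForm_injective ((LinearMap.ext h).trans (map_zero _).symm))
  exact ⟨(𝔥 x y)⁻¹ • y, by rw [map_smul, smul_eq_mul, inv_mul_cancel₀ hy]⟩

lemma exists_pair_hermitianForm_eq_one {a b : ι → F4} (ha : a ≠ 0) (hb : b ≠ 0) (hab : 𝔥 a b = 0) :
    ∃ c d, 𝔥 c d = 1 ∧ 𝔥 d a = 1 ∧ 𝔥 c b = 1 := by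
  obtain ⟨d, hd⟩ := exists_hermitianForm_eq_one ha
  obtain ⟨c, hc⟩ := exists_hermitianForm_eq_one hb
  refine ⟨c + (1 + 𝔥 c d) ^ 2 • a, d, ?_, by rw [hermitianForm_comm, hd, one_pow], ?_⟩
  · rw [map_add, LinearMap.add_apply, hermitianForm_smul_left, hd, ← pow_mul, F4.pow_four]
    grind
  · rw [map_add, LinearMap.add_apply, hermitianForm_smul_left, hab, hermitianForm_comm, hc]
    simp

lemma hermitianForm_add_smul_self (x y : ι → F4) (c : F4) :
    𝔥 (x + c • y) (x + c • y) = 𝔥 x x + c ^ 3 * 𝔥 y y + (c * 𝔥 x y + (c * 𝔥 x y) ^ 2) := by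
  simp only [map_add, LinearMap.add_apply, map_smul, hermitianForm_smul_left, smul_eq_mul,
    hermitianForm_comm y x]
  ring

/-- The hermitian form vanishes identically on `W`. -/
def IsTotallyIsotropic (W : Submodule F4 (ι → F4)) : Prop :=
  ∀ x ∈ W, ∀ y ∈ W, 𝔥 x y = 0

/-- The orthogonal complement for the hermitian form. -/
noncomputable abbrev perp (W : Submodule F4 (ι → F4)) : Submodule F4 (ι → F4) :=
  W.orthogonalBilin hermitianForm

lemma mem_perp_iff {W : Submodule F4 (ι → F4)} {y : ι → F4} :
    y ∈ perp W ↔ ∀ x ∈ W, 𝔥 x y = 0 := Iff.rfl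

lemma isTotallyIsotropic_of_forall_self {W : Submodule F4 (ι → F4)}
    (h : ∀ x ∈ W, 𝔥 x x = 0) : IsTotallyIsotropic W := by
  intro x hx y hy
  by_contra hxy
  obtain ⟨w, hw0, hw1⟩ := F4.exists_ne_zero_ne_one
  have hsum := hermitianForm_add_smul_self x y (w * (𝔥 x y)⁻¹)
  rw [h x hx, h y hy, h _ (W.add_mem hx (W.smul_mem _ hy)),
    inv_mul_cancel_right₀ hxy] at hsum
  have := F4.sq_add_self_add_one hw0 hw1
  grind

lemma IsTotallyIsotropic.le_perp {W : Submodule F4 (ι → F4)} (h : IsTotallyIsotropic W) :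
    W ≤ perp W := fun y hy x hx => h x hx y hy

lemma mem_perp_span_iff {s : Set (ι → F4)} {y : ι → F4} :
    y ∈ perp (Submodule.span F4 s) ↔ ∀ x ∈ s, 𝔥 x y = 0 := by
  refine ⟨fun h x hx => h x (Submodule.subset_span hx), fun h x hx => ?_⟩
  have hker : Submodule.span F4 s ≤ LinearMap.ker (hermitianForm y) :=
    Submodule.span_le.2 fun z hz => hermitianForm_isRefl _ _ (h z hz)
  exact hermitianForm_isRefl _ _ (hker hx)

lemma isTotallyIsotropic_span {s : Set (ι → F4)} (h : ∀ x ∈ s, ∀ y ∈ s, 𝔥 x y = 0) :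
    IsTotallyIsotropic (Submodule.span F4 s) := by
  intro x hx y hy
  refine mem_perp_span_iff.2 (fun z hz => ?_) x hx
  exact hermitianForm_isRefl _ _ (mem_perp_span_iff.2 (fun u hu => h u hu z hz) y hy)

lemma finrank_add_finrank_perp (W : Submodule F4 (ι → F4)) :
    Module.finrank F4 W + Module.finrank F4 (perp W) = Fintype.card ι := by
  have : RingHomSurjective (frobenius F4 2) := ⟨(frobeniusEquiv F4 2).surjective⟩
  let Φ : Submodule F4 (Module.Dual F4 (ι → F4)) := W.map hermitianForm
  have hcard : Nat.card Φ = Nat.card W :=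
    Nat.card_image_of_injective hermitianForm_injective (W : Set (ι → F4))
  have hΦ : Module.finrank F4 Φ = Module.finrank F4 W := F4.finrank_eq_of_natCard_eq hcard
  have hperp : perp W = Φ.dualCoannihilator := by
    ext y
    simp [Φ, Submodule.mem_dualCoannihilator]
  rw [hperp, ← hΦ, Subspace.finrank_add_finrank_dualCoannihilator_eq,
    Module.finrank_fintype_fun_eq_card]

lemma perp_perp (W : Submodule F4 (ι → F4)) : perp (perp W) = W := by
  have hle : W ≤ perp (perp W) := fun x hx y hy => hermitianForm_isRefl _ _ (hy x hx)
  refine (Submodule.eq_of_le_of_finrank_eq hle ?_).symm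
  have := finrank_add_finrank_perp W
  have := finrank_add_finrank_perp (perp W)
  omega

lemma exists_smul_eq_of_forall_orthogonal {x y : ι → F4} (h : ∀ z, 𝔥 z x = 0 → 𝔥 z y = 0) :
    ∃ c : F4, c • x = y := by
  rw [← Submodule.mem_span_singleton, ← perp_perp (Submodule.span F4 {x})]
  exact fun z hz => h z (hermitianForm_isRefl _ _ (hz x (Submodule.mem_span_singleton_self x)))

lemma exists_smul_eq_of_linearIndependent {κ : Type*} [Fintype κ] {v : κ → ι → F4}
    (hv : LinearIndependent F4 v) (hcard : Fintype.card κ + 1 = Fintype.card ι) {x y : ι → F4}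
    (hx : x ≠ 0) (hvx : ∀ i, 𝔥 (v i) x = 0) (hvy : ∀ i, 𝔥 (v i) y = 0) : ∃ c : F4, c • x = y := by
  have mem_perp {z : ι → F4} (hz : ∀ i, 𝔥 (v i) z = 0) :
      z ∈ perp (Submodule.span F4 (Set.range v)) := mem_perp_span_iff.2 (Set.forall_mem_range.2 hz)
  have hrank := finrank_add_finrank_perp (Submodule.span F4 (Set.range v))
  rw [finrank_span_eq_card hv, ← hcard, Nat.add_left_cancel_iff] at hrank
  obtain ⟨c, hc⟩ := (finrank_eq_one_iff_of_nonzero' (⟨x, mem_perp hvx⟩ : perp _)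
    (by simpa using hx)).1 hrank ⟨y, mem_perp hvy⟩
  exact ⟨c, congrArg Subtype.val hc⟩

lemma IsTotallyIsotropic.sup_span_singleton {W : Submodule F4 (ι → F4)} {x : ι → F4}
    (hW : IsTotallyIsotropic W) (hx : x ∈ perp W) (hxx : 𝔥 x x = 0) :
    IsTotallyIsotropic (W ⊔ Submodule.span F4 {x}) := by
  refine isTotallyIsotropic_of_forall_self fun z hz => ?_
  obtain ⟨y, hy, u, hu, rfl⟩ := Submodule.mem_sup.1 hz
  obtain ⟨c, rfl⟩ := Submodule.mem_span_singleton.1 hu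
  rw [hermitianForm_add_smul_self, hW y hy y hy, hxx, mem_perp_iff.1 hx y hy]
  ring

lemma hermitianForm_self_eq_zero_or_one (x : ι → F4) : 𝔥 x x = 0 ∨ 𝔥 x x = 1 := by
  have := hermitianForm_comm x x
  grind

lemma exists_isotropic_ne_zero {W : Submodule F4 (ι → F4)} (hW : 1 < Module.finrank F4 W) :
    ∃ x ∈ W, x ≠ 0 ∧ 𝔥 x x = 0 := by
  by_contra! h
  have self_eq_one : ∀ x ∈ W, x ≠ 0 → 𝔥 x x = 1 := fun x hx hx0 =>
    (hermitianForm_self_eq_zero_or_one x).resolve_left (h x hx hx0)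
  have := Module.nontrivial_of_finrank_pos (zero_lt_one.trans hW)
  obtain ⟨⟨x, hx⟩, hx0⟩ := exists_ne (0 : W)
  obtain ⟨⟨y, hy⟩, hxy⟩ := exists_linearIndependent_pair_of_one_lt_finrank hW hx0
  obtain ⟨c, hc0, hc⟩ : ∃ c : F4, c ≠ 0 ∧ c * 𝔥 x y + (c * 𝔥 x y) ^ 2 = 0 := by
    rcases eq_or_ne (𝔥 x y) 0 with hβ | hβ
    · exact ⟨1, one_ne_zero, by simp [hβ]⟩
    · exact ⟨(𝔥 x y)⁻¹, inv_ne_zero hβ, by simp [hβ, CharTwo.add_self_eq_zero]⟩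
  have hne := LinearIndependent.pair_iff.1 hxy
  have hy0 : y ≠ 0 := fun hy0 => one_ne_zero (hne 0 1 (by ext; simp [hy0])).2
  refine h (x + c • y) (W.add_mem hx (W.smul_mem c hy)) (fun h0 => ?_) ?_
  · exact one_ne_zero (hne 1 c (Subtype.ext (by simpa using h0))).1
  · rw [hermitianForm_add_smul_self, hc, self_eq_one x hx (by simpa using hx0),
      self_eq_one y hy hy0, F4.pow_three hc0]
    grind

lemma IsTotallyIsotropic.exists_le_finrank_succ {W : Submodule F4 (ι → F4)}
    (hW : IsTotallyIsotropic W) (hcard : 2 * (Module.finrank F4 W + 1) ≤ Fintype.card ι) :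
    ∃ U, W ≤ U ∧ IsTotallyIsotropic U ∧ Module.finrank F4 U = Module.finrank F4 W + 1 := by
  obtain ⟨C, hC⟩ := W.exists_isCompl
  have hrank : 1 < Module.finrank F4 (C ⊓ perp W : Submodule F4 (ι → F4)) := by
    have hCW := Submodule.finrank_add_eq_of_isCompl hC
    have hperp := finrank_add_finrank_perp W
    have hinf := Submodule.finrank_sup_add_finrank_inf_eq C (perp W)
    have hsup := Submodule.finrank_le (C ⊔ perp W)
    rw [Module.finrank_fintype_fun_eq_card] at hCW hsup
    omega
  obtain ⟨x, ⟨hxC, hxW⟩, hx0, hxx⟩ := exists_isotropic_ne_zero hrank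
  refine ⟨W ⊔ Submodule.span F4 {x}, le_sup_left, hW.sup_span_singleton hxW hxx, ?_⟩
  have hdisj : W ⊓ Submodule.span F4 {x} = ⊥ :=
    (hC.disjoint.mono_right ((Submodule.span_singleton_le_iff_mem x C).2 hxC)).eq_bot
  have hsup := Submodule.finrank_sup_add_finrank_inf_eq W (Submodule.span F4 {x})
  rwa [hdisj, finrank_bot, add_zero, finrank_span_singleton hx0] at hsup

lemma IsTotallyIsotropic.exists_le_finrank_eq {W : Submodule F4 (ι → F4)}
    (hW : IsTotallyIsotropic W) {n : ℕ} (hn : Module.finrank F4 W ≤ n)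
    (hcard : 2 * n ≤ Fintype.card ι) :
    ∃ U, W ≤ U ∧ IsTotallyIsotropic U ∧ Module.finrank F4 U = n := by
  induction n, hn using Nat.le_induction with
  | base => exact ⟨W, le_rfl, hW, rfl⟩
  | succ n _ ih =>
    obtain ⟨U, hWU, hU, rfl⟩ := ih (by omega)
    obtain ⟨U', hUU', hU', hrank⟩ := hU.exists_le_finrank_succ hcard
    exact ⟨U', hWU.trans hUU', hU', hrank⟩

end Form

/-! ### Planes and quadrangles of planes -/

lemma finrank_inf_ne_zero_iff {K V : Type*} [DivisionRing K] [AddCommGroup V] [Module K V]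
    [FiniteDimensional K V] {A B : Submodule K V} :
    Module.finrank K (A ⊓ B : Submodule K V) ≠ 0 ↔ ∃ x ≠ 0, x ∈ A ∧ x ∈ B := by
  simp only [ne_eq, Submodule.finrank_eq_zero, Submodule.eq_bot_iff, Submodule.mem_inf]
  grind

lemma inf_eq_span_singleton {K V : Type*} [DivisionRing K] [AddCommGroup V] [Module K V]
    [FiniteDimensional K V] {A B : Submodule K V}
    (h : Module.finrank K (A ⊓ B : Submodule K V) = 1) {x : V} (hx : x ≠ 0) (hA : x ∈ A)
    (hB : x ∈ B) : A ⊓ B = Submodule.span K {x} :=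
  (Submodule.eq_of_le_of_finrank_eq
    ((Submodule.span_singleton_le_iff_mem _ _).2 (Submodule.mem_inf.2 ⟨hA, hB⟩))
    ((finrank_span_singleton hx).trans h.symm)).symm

lemma icNum_injective : Function.Injective icNum := by
  intro a b h
  have hpow : (-2 : ℚ) ^ a = (-2) ^ b := by
    unfold icNum at h
    linarith
  have habs : (2 : ℚ) ^ a = 2 ^ b := by simpa [abs_pow] using congrArg abs hpow
  exact pow_right_injective₀ (by norm_num) (by norm_num) habs

namespace FermatPlane

lemma finrank_val (P : FermatPlane) : Module.finrank F4 P.val = 3 := P.property.1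

lemma isTotallyIsotropic (P : FermatPlane) : IsTotallyIsotropic P.val :=
  isTotallyIsotropic_of_forall_self fun x hx => (hermitianForm_self x).trans (P.property.2 x hx)

/-- The linear dimension of the intersection of two planes, on which `ν_P` depends. -/
noncomputable def meetRank (P Q : FermatPlane) : ℕ :=
  Module.finrank F4 (P.val ⊓ Q.val : Submodule F4 (Fin 6 → F4))

lemma meetRank_ne_zero_iff {P Q : FermatPlane} :
    P.meetRank Q ≠ 0 ↔ ∃ x ≠ 0, x ∈ P.val ∧ x ∈ Q.val := finrank_inf_ne_zero_iff

/-- The plane carried by a totally isotropic subspace of dimension 3. -/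
def ofIsTotallyIsotropic (W : Submodule F4 (Fin 6 → F4)) (hW : IsTotallyIsotropic W)
    (hrank : Module.finrank F4 W = 3) : FermatPlane :=
  ⟨W, hrank, fun x hx => (hermitianForm_self x).symm.trans (hW x hx x hx)⟩

lemma exists_mem_mem {x y : Fin 6 → F4} (hx : 𝔥 x x = 0) (hy : 𝔥 y y = 0) (hxy : 𝔥 x y = 0) :
    ∃ P : FermatPlane, x ∈ P.val ∧ y ∈ P.val := by
  have hspan : IsTotallyIsotropic (Submodule.span F4 {x, y}) := by
    refine isTotallyIsotropic_span ?_
    simp [hx, hy, hxy, hermitianForm_eq_zero_comm.1 hxy]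
  have hspan_rank : Module.finrank F4 (Submodule.span F4 {x, y}) ≤ 3 := by
    have := finrank_range_le_card (R := F4) ![x, y]
    rw [Set.finrank, Matrix.range_cons_cons_empty, Fintype.card_fin] at this
    exact this.trans (by norm_num)
  obtain ⟨U, hU, hiso, hrank⟩ := hspan.exists_le_finrank_eq hspan_rank (by simp)
  exact ⟨ofIsTotallyIsotropic U hiso hrank, hU (Submodule.subset_span (by simp)),
    hU (Submodule.subset_span (by simp))⟩

lemma perp_val (P : FermatPlane) : perp P.val = P.val := by
  have hrank := finrank_add_finrank_perp P.val
  rw [P.finrank_val, Fintype.card_fin] at hrank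
  exact (Submodule.eq_of_le_of_finrank_eq P.isTotallyIsotropic.le_perp
    (by rw [P.finrank_val]; omega)).symm

lemma mem_or_mem_of_meetRank_eq_two {A B : FermatPlane} (hAB : A.meetRank B = 2)
    {a b : Fin 6 → F4} (ha : a ∈ A.val) (hb : b ∈ B.val) (hab : 𝔥 a b = 0) :
    a ∈ B.val ∨ b ∈ A.val := by
  refine or_iff_not_imp_left.2 fun haB => ?_
  have hle : (A.val ⊓ B.val) ⊔ Submodule.span F4 {a} ≤ A.val :=
    sup_le inf_le_left ((Submodule.span_singleton_le_iff_mem a A.val).2 ha)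
  have hlt : A.val ⊓ B.val < (A.val ⊓ B.val) ⊔ Submodule.span F4 {a} :=
    left_lt_sup.2 fun h => haB (h (Submodule.mem_span_singleton_self a)).2
  have hsup : (A.val ⊓ B.val) ⊔ Submodule.span F4 {a} = A.val := by
    refine Submodule.eq_of_le_of_finrank_le hle ?_
    have hrank := Submodule.finrank_lt_finrank_of_lt hlt
    rw [A.finrank_val]
    exact hAB.symm.trans_lt hrank
  rw [← A.perp_val, ← hsup, mem_perp_iff]
  intro z hz
  obtain ⟨x, hx, u, hu, rfl⟩ := Submodule.mem_sup.1 hz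
  obtain ⟨c, rfl⟩ := Submodule.mem_span_singleton.1 hu
  rw [map_add, LinearMap.add_apply, hermitianForm_smul_left, hab,
    B.isTotallyIsotropic x hx.2 b hb]
  simp

lemma exists_common_mem_of_meetRank_eq_two {A B Q : FermatPlane} (hAB : A.meetRank B = 2)
    (hA : A.meetRank Q ≠ 0) (hB : B.meetRank Q ≠ 0) :
    ∃ v ≠ 0, v ∈ A.val ∧ v ∈ B.val ∧ v ∈ Q.val := by
  obtain ⟨a, ha0, haA, haQ⟩ := meetRank_ne_zero_iff.1 hA
  obtain ⟨b, hb0, hbB, hbQ⟩ := meetRank_ne_zero_iff.1 hB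
  rcases mem_or_mem_of_meetRank_eq_two hAB haA hbB (Q.isTotallyIsotropic a haQ b hbQ) with h | h
  · exact ⟨a, ha0, haA, h, haQ⟩
  · exact ⟨b, hb0, h, hbB, hbQ⟩

lemma inf_le_of_meetRank {P R R' : FermatPlane} (hR : R.meetRank R' = 1)
    (hPR : P.meetRank R = 2) (hPR' : P.meetRank R' = 2) : R.val ⊓ R'.val ≤ P.val := by
  have hdim := Submodule.finrank_sup_add_finrank_inf_eq (P.val ⊓ R.val) (P.val ⊓ R'.val)
  have hsup := Submodule.finrank_mono
    (sup_le inf_le_left inf_le_left : (P.val ⊓ R.val) ⊔ (P.val ⊓ R'.val) ≤ P.val)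
  rw [P.finrank_val] at hsup
  rw [← inf_inf_distrib_left, ← meetRank, ← meetRank, hPR, hPR'] at hdim
  refine inf_eq_right.1 (Submodule.eq_of_le_of_finrank_le inf_le_right ?_)
  rw [← meetRank, hR]
  omega

/-- Two pairs `P, P'` and `R, R'` of planes, each meeting in a point, such that every plane of
one pair meets every plane of the other in a line. The two points then coincide, so quadrangles
describe the points of the cubic in terms of the pairing on planes alone. -/
structure IsQuadrangle (P P' R R' : FermatPlane) : Prop where
  meetRank_left : P.meetRank P' = 1
  meetRank_right : R.meetRank R' = 1
  meetRank_fst_fst : P.meetRank R = 2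
  meetRank_fst_snd : P.meetRank R' = 2
  meetRank_snd_fst : P'.meetRank R = 2
  meetRank_snd_snd : P'.meetRank R' = 2

namespace IsQuadrangle

variable {P P' R R' : FermatPlane}

lemma inf_eq_inf (h : IsQuadrangle P P' R R') : P.val ⊓ P'.val = R.val ⊓ R'.val := by
  refine (Submodule.eq_of_le_of_finrank_eq (le_inf ?_ ?_) ?_).symm
  · exact inf_le_of_meetRank h.meetRank_right h.meetRank_fst_fst h.meetRank_fst_snd
  · exact inf_le_of_meetRank h.meetRank_right h.meetRank_snd_fst h.meetRank_snd_snd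
  · exact h.meetRank_right.trans h.meetRank_left.symm

lemma exists_mem_mem (h : IsQuadrangle P P' R R') : ∃ x ≠ 0, x ∈ P.val ∧ x ∈ P'.val :=
  meetRank_ne_zero_iff.1 (by simp [h.meetRank_left])

lemma mem_iff (h : IsQuadrangle P P' R R') {x : Fin 6 → F4} (hx : x ≠ 0) (hP : x ∈ P.val)
    (hP' : x ∈ P'.val) (Q : FermatPlane) :
    x ∈ Q.val ↔ P.meetRank Q ≠ 0 ∧ P'.meetRank Q ≠ 0 ∧ R.meetRank Q ≠ 0 ∧ R'.meetRank Q ≠ 0 := by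
  have hPP' := inf_eq_span_singleton h.meetRank_left hx hP hP'
  have hRR' : x ∈ R.val ⊓ R'.val := h.inf_eq_inf ▸ ⟨hP, hP'⟩
  refine ⟨fun hQ => ?_, fun ⟨hPQ, hP'Q, hRQ, hR'Q⟩ => ?_⟩
  · simp only [meetRank_ne_zero_iff]
    exact ⟨⟨x, hx, hP, hQ⟩, ⟨x, hx, hP', hQ⟩, ⟨x, hx, hRR'.1, hQ⟩, ⟨x, hx, hRR'.2, hQ⟩⟩
  have mem_of_center {v : Fin 6 → F4} (hv : v ≠ 0) (hvQ : v ∈ Q.val)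
      (hvx : v ∈ P.val ⊓ P'.val) : x ∈ Q.val := by
    obtain ⟨c, rfl⟩ := Submodule.mem_span_singleton.1 (hPP' ▸ hvx)
    exact (Submodule.smul_mem_iff _ (left_ne_zero_of_smul hv)).1 hvQ
  obtain ⟨a, ha0, haP, haR, haQ⟩ := exists_common_mem_of_meetRank_eq_two h.meetRank_fst_fst hPQ hRQ
  obtain ⟨b, hb0, hbP', hbR', hbQ⟩ :=
    exists_common_mem_of_meetRank_eq_two h.meetRank_snd_snd hP'Q hR'Q
  rcases mem_or_mem_of_meetRank_eq_two h.meetRank_fst_snd haP hbR'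
    (Q.isTotallyIsotropic a haQ b hbQ) with haR' | hbP
  · exact mem_of_center ha0 haQ (h.inf_eq_inf ▸ ⟨haR, haR'⟩)
  · exact mem_of_center hb0 hbQ ⟨hbP, hbP'⟩

end IsQuadrangle

end FermatPlane

open FermatPlane in
lemma preservesNuP_iff {σ : Equiv.Perm FermatPlane} :
    PreservesNuP σ ↔ ∀ P Q, (σ P).meetRank (σ Q) = P.meetRank Q :=
  forall₂_congr fun _ _ => icNum_injective.eq_iff

/-! ### Hyperbolic frames -/

/-- Two families spanning totally isotropic subspaces in duality: a basis of a sum of hyperbolic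
planes. -/
structure IsHyperbolicFrame {ι κ : Type*} [Fintype ι] [DecidableEq κ] (e f : κ → ι → F4) :
    Prop where
  left : ∀ i j, 𝔥 (e i) (e j) = 0
  right : ∀ i j, 𝔥 (f i) (f j) = 0
  left_right : ∀ i j, 𝔥 (e i) (f j) = if i = j then 1 else 0

/-- The vector `∑ aᵢ eᵢ + ∑ bᵢ fᵢ` with coordinates `(a, b)`. -/
noncomputable def hyperbolicMap {ι κ : Type*} [Fintype κ] (e f : κ → ι → F4) :
    (κ → F4) × (κ → F4) →ₗ[F4] (ι → F4) :=
  (Fintype.linearCombination F4 e).coprod (Fintype.linearCombination F4 f)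

namespace IsHyperbolicFrame

variable {ι κ : Type*} [Fintype ι] [DecidableEq κ] {e f : κ → ι → F4}

lemma symm (h : IsHyperbolicFrame e f) : IsHyperbolicFrame f e where
  left := h.right
  right := h.left
  left_right i j := by
    rw [hermitianForm_comm, h.left_right, ite_pow, one_pow, zero_pow two_ne_zero]
    simp only [eq_comm]

lemma ne_zero (h : IsHyperbolicFrame e f) (i : κ) : e i ≠ 0 := fun hi => by
  simpa [hi] using h.left_right i i

lemma smul (h : IsHyperbolicFrame e f) {u : κ → F4} (hu : ∀ i, u i ≠ 0) :
    IsHyperbolicFrame (fun i => u i • e i) (fun i => u i • f i) where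
  left i j := by simp [h.left]
  right i j := by simp [h.right]
  left_right i j := by
    rw [hermitianForm_smul_left, map_smul, h.left_right]
    split_ifs with hij
    · rw [hij, smul_eq_mul, mul_one, ← pow_succ, F4.pow_three (hu j)]
    · simp

end IsHyperbolicFrame

section Coordinates

variable {ι κ : Type*} [Fintype κ] {e f : κ → ι → F4}

lemma hyperbolicMap_apply (a b : κ → F4) :
    hyperbolicMap e f (a, b) = ∑ i, a i • e i + ∑ i, b i • f i := rfl

lemma hyperbolicMap_swap (a b : κ → F4) : hyperbolicMap e f (a, b) = hyperbolicMap f e (b, a) := by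
  rw [hyperbolicMap_apply, hyperbolicMap_apply, add_comm]

lemma hyperbolicMap_single_left [DecidableEq κ] (i : κ) :
    hyperbolicMap e f (Pi.single i 1, 0) = e i := by
  simp [hyperbolicMap]

lemma hyperbolicMap_single_right [DecidableEq κ] (i : κ) :
    hyperbolicMap e f (0, Pi.single i 1) = f i := by
  simp [hyperbolicMap]

variable [Fintype ι]

lemma hermitianForm_hyperbolicMap_left (a b : κ → F4) (y : ι → F4) :
    𝔥 (hyperbolicMap e f (a, b)) y = 𝔥 a (fun i => 𝔥 (e i) y) + 𝔥 b (fun i => 𝔥 (f i) y) := by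
  simp only [hyperbolicMap_apply, map_add, map_sum, LinearMap.add_apply, LinearMap.sum_apply,
    hermitianForm_smul_left, hermitianForm_apply a, hermitianForm_apply b]

namespace IsHyperbolicFrame

variable [DecidableEq κ]

lemma form_left_hyperbolicMap (h : IsHyperbolicFrame e f) (i : κ) (a b : κ → F4) :
    𝔥 (e i) (hyperbolicMap e f (a, b)) = b i := by
  simp [hyperbolicMap_apply, h.left, h.left_right]

lemma form_right_hyperbolicMap (h : IsHyperbolicFrame e f) (i : κ) (a b : κ → F4) :
    𝔥 (f i) (hyperbolicMap e f (a, b)) = a i := by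
  rw [hyperbolicMap_swap, h.symm.form_left_hyperbolicMap]

lemma form_hyperbolicMap (h : IsHyperbolicFrame e f) (a b a' b' : κ → F4) :
    𝔥 (hyperbolicMap e f (a, b)) (hyperbolicMap e f (a', b')) = 𝔥 a b' + 𝔥 b a' := by
  simp only [hermitianForm_hyperbolicMap_left, h.form_left_hyperbolicMap,
    h.form_right_hyperbolicMap]

lemma hyperbolicMap_injective (h : IsHyperbolicFrame e f) :
    Function.Injective (hyperbolicMap e f) := fun p q hpq => by
  refine Prod.ext (funext fun i => ?_) (funext fun i => ?_)
  · rw [← h.form_right_hyperbolicMap i p.1 p.2, hpq, h.form_right_hyperbolicMap]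
  · rw [← h.form_left_hyperbolicMap i p.1 p.2, hpq, h.form_left_hyperbolicMap]

lemma hyperbolicMap_bijective (h : IsHyperbolicFrame e f)
    (hcard : 2 * Fintype.card κ = Fintype.card ι) : Function.Bijective (hyperbolicMap e f) := by
  refine ⟨h.hyperbolicMap_injective, ?_⟩
  refine (LinearMap.injective_iff_surjective_of_finrank_eq_finrank ?_).1 h.hyperbolicMap_injective
  simp [← hcard, two_mul]

lemma eq_hyperbolicMap (h : IsHyperbolicFrame e f)
    (hcard : 2 * Fintype.card κ = Fintype.card ι) (x : ι → F4) :
    x = hyperbolicMap e f (fun i => 𝔥 (f i) x, fun i => 𝔥 (e i) x) := by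
  obtain ⟨⟨a, b⟩, rfl⟩ := (h.hyperbolicMap_bijective hcard).2 x
  simp only [h.form_left_hyperbolicMap, h.form_right_hyperbolicMap]

end IsHyperbolicFrame

end Coordinates

lemma IsHyperbolicFrame.linearIndependent {ι κ : Type*} [Fintype ι] [Finite κ] [DecidableEq κ]
    {e f : κ → ι → F4} (h : IsHyperbolicFrame e f) :
    LinearIndependent F4 (Sum.elim e f) := by
  have := Fintype.ofFinite κ
  refine Fintype.linearIndependent_iff.2 fun c hc => ?_
  have hzero : hyperbolicMap e f (fun i => c (.inl i), fun i => c (.inr i)) = 0 := by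
    simpa [hyperbolicMap_apply, Fintype.sum_sum_type] using hc
  have := h.hyperbolicMap_injective (hzero.trans (map_zero _).symm)
  rintro (i | i)
  · exact congrFun (congrArg Prod.fst this) i
  · exact congrFun (congrArg Prod.snd this) i

section Existence

variable {ι : Type*} [Fintype ι]

lemma exists_isotropic_form_eq_one {U : Submodule F4 (ι → F4)} {x y : ι → F4} (hx : x ∈ U)
    (hy : y ∈ U) (hxx : 𝔥 x x = 0) (hxy : 𝔥 x y = 1) : ∃ z ∈ U, 𝔥 z z = 0 ∧ 𝔥 x z = 1 := by
  obtain ⟨c, hc⟩ : ∃ c : F4, c + c ^ 2 = 𝔥 y y := by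
    obtain ⟨w, hw0, hw1⟩ := F4.exists_ne_zero_ne_one
    have := F4.sq_add_self_add_one hw0 hw1
    rcases hermitianForm_self_eq_zero_or_one y with h | h
    · exact ⟨0, by simp [h]⟩
    · exact ⟨w, by grind⟩
  refine ⟨y + c • x, U.add_mem hy (U.smul_mem c hx), ?_, by simp [hxx, hxy]⟩
  rw [hermitianForm_add_smul_self, hxx, hermitianForm_comm y x, hxy]
  grind

lemma IsHyperbolicFrame.exists_orthogonal_pair {κ : Type*} [Fintype κ] [DecidableEq κ]
    {e f : κ → ι → F4} (h : IsHyperbolicFrame e f)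
    (hcard : 2 * (Fintype.card κ + 1) ≤ Fintype.card ι) :
    ∃ x y, 𝔥 x x = 0 ∧ 𝔥 y y = 0 ∧ 𝔥 x y = 1 ∧
      (∀ i, 𝔥 (e i) x = 0 ∧ 𝔥 (f i) x = 0) ∧ ∀ i, 𝔥 (e i) y = 0 ∧ 𝔥 (f i) y = 0 := by
  let U := perp (Submodule.span F4 (Set.range (Sum.elim e f)))
  have mem_U {x : ι → F4} : x ∈ U ↔ ∀ i, 𝔥 (e i) x = 0 ∧ 𝔥 (f i) x = 0 := by
    simp only [U, mem_perp_span_iff, Set.forall_mem_range, Sum.forall, Sum.elim_inl,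
      Sum.elim_inr, forall_and]
  have hU : 1 < Module.finrank F4 U := by
    have hperp := finrank_add_finrank_perp (Submodule.span F4 (Set.range (Sum.elim e f)))
    have hspan := finrank_range_le_card (R := F4) (Sum.elim e f)
    rw [Set.finrank, Fintype.card_sum] at hspan
    change 1 < Module.finrank F4 (perp _)
    omega
  obtain ⟨x, hxU, hx0, hxx⟩ := exists_isotropic_ne_zero hU
  obtain ⟨y, hxy⟩ := exists_hermitianForm_eq_one hx0
  have hproj : y - hyperbolicMap e f (fun i => 𝔥 (f i) y, fun i => 𝔥 (e i) y) ∈ U := by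
    simp [mem_U, h.form_left_hyperbolicMap, h.form_right_hyperbolicMap]
  have hxproj : 𝔥 x (y - hyperbolicMap e f (fun i => 𝔥 (f i) y, fun i => 𝔥 (e i) y)) = 1 := by
    have he : (fun i => 𝔥 (e i) x) = 0 := funext fun i => (mem_U.1 hxU i).1
    have hf : (fun i => 𝔥 (f i) x) = 0 := funext fun i => (mem_U.1 hxU i).2
    rw [map_sub, hxy, sub_eq_self, hermitianForm_eq_zero_comm, hermitianForm_hyperbolicMap_left,
      he, hf, map_zero, map_zero, add_zero]
  obtain ⟨z, hzU, hzz, hxz⟩ := exists_isotropic_form_eq_one hxU hproj hxx hxproj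
  exact ⟨x, z, hxx, hzz, hxz, mem_U.1 hxU, mem_U.1 hzU⟩

lemma IsHyperbolicFrame.cons {n : ℕ} {e f : Fin n → ι → F4} (h : IsHyperbolicFrame e f)
    {x y : ι → F4} (hxx : 𝔥 x x = 0) (hyy : 𝔥 y y = 0) (hxy : 𝔥 x y = 1)
    (hx : ∀ i, 𝔥 (e i) x = 0 ∧ 𝔥 (f i) x = 0) (hy : ∀ i, 𝔥 (e i) y = 0 ∧ 𝔥 (f i) y = 0) :
    IsHyperbolicFrame (Fin.cons x e : Fin (n + 1) → ι → F4) (Fin.cons y f) := by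
  have hx' i : 𝔥 x (e i) = 0 ∧ 𝔥 x (f i) = 0 :=
    (hx i).imp hermitianForm_eq_zero_comm.1 hermitianForm_eq_zero_comm.1
  have hy' i : 𝔥 y (e i) = 0 ∧ 𝔥 y (f i) = 0 :=
    (hy i).imp hermitianForm_eq_zero_comm.1 hermitianForm_eq_zero_comm.1
  constructor <;> intro i j <;> cases i using Fin.cases <;> cases j using Fin.cases <;>
    simp [hxx, hyy, hxy, hx, hx', hy, hy', h.left, h.right, h.left_right, Fin.succ_ne_zero,
      (Fin.succ_ne_zero _).symm]

lemma exists_isHyperbolicFrame {x : ι → F4} (hx : x ≠ 0) (hxx : 𝔥 x x = 0) (n : ℕ)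
    (hcard : 2 * (n + 1) ≤ Fintype.card ι) :
    ∃ e f : Fin (n + 1) → ι → F4, IsHyperbolicFrame e f ∧ e (Fin.last n) = x := by
  induction n with
  | zero =>
    obtain ⟨y, hxy⟩ := exists_hermitianForm_eq_one hx
    obtain ⟨z, -, hzz, hxz⟩ :=
      exists_isotropic_form_eq_one (U := ⊤) Submodule.mem_top Submodule.mem_top hxx hxy
    refine ⟨fun _ => x, fun _ => z, ⟨fun _ _ => hxx, fun _ _ => hzz, fun i j => ?_⟩, rfl⟩
    rw [hxz, if_pos (Subsingleton.elim (α := Fin 1) i j)]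
  | succ n ih =>
    obtain ⟨e, f, h, hlast⟩ := ih (by omega)
    obtain ⟨y, z, hyy, hzz, hyz, hy, hz⟩ := h.exists_orthogonal_pair (by simpa using hcard)
    exact ⟨_, _, h.cons hyy hzz hyz hy hz, by rw [← Fin.succ_last, Fin.cons_succ, hlast]⟩

end Existence

section Quadrangles

lemma span_image_inf_span_image {R M α : Type*} [Ring R] [AddCommGroup M] [Module R M] {v : α → M}
    (hv : LinearIndependent R v) (s t : Set α) :
    Submodule.span R (v '' s) ⊓ Submodule.span R (v '' t) = Submodule.span R (v '' (s ∩ t)) := by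
  simp only [Finsupp.span_image_eq_map_linearCombination, Finsupp.supported_inter]
  exact (Submodule.map_inf _ hv).symm

lemma finrank_span_image_finset {R M α : Type*} [DivisionRing R] [AddCommGroup M] [Module R M]
    {v : α → M} (hv : LinearIndependent R v) (s : Finset α) :
    Module.finrank R (Submodule.span R (v '' s)) = s.card := by
  have h := finrank_span_eq_card (hv.comp ((↑) : s → α) Subtype.val_injective)
  rwa [Set.range_comp, Subtype.range_coe_subtype, Finset.setOfPred_mem, Fintype.card_coe] at h

open FermatPlane

variable {e f : Fin 3 → Fin 6 → F4}

/-- The plane spanned by three vectors of a hyperbolic frame no two of which are partners. -/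
noncomputable def IsHyperbolicFrame.plane (h : IsHyperbolicFrame e f) (s : Finset (Fin 3 ⊕ Fin 3))
    (hs : s.card = 3) (hs' : ∀ i, .inl i ∈ s → .inr i ∉ s) : FermatPlane :=
  ofIsTotallyIsotropic (Submodule.span F4 (Sum.elim e f '' s))
    (isTotallyIsotropic_span <| by
      rintro _ ⟨i | i, hi, rfl⟩ _ ⟨j | j, hj, rfl⟩
      · exact h.left i j
      · exact (h.left_right i j).trans (if_neg (by rintro rfl; exact hs' i hi hj))
      · exact (h.symm.left_right i j).trans (if_neg (by rintro rfl; exact hs' i hj hi))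
      · exact h.right i j)
    ((finrank_span_image_finset h.linearIndependent s).trans hs)

lemma IsHyperbolicFrame.meetRank_plane (h : IsHyperbolicFrame e f)
    {s t : Finset (Fin 3 ⊕ Fin 3)} {hs hs' ht ht'} :
    (h.plane s hs hs').meetRank (h.plane t ht ht') = (s ∩ t).card := by
  rw [← finrank_span_image_finset h.linearIndependent, Finset.coe_inter,
    ← span_image_inf_span_image h.linearIndependent]
  rfl

lemma exists_isQuadrangle_mem {x : Fin 6 → F4} (hx : x ≠ 0) (hxx : 𝔥 x x = 0) :
    ∃ P P' R R', IsQuadrangle P P' R R' ∧ x ∈ P.val ∧ x ∈ P'.val := by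
  obtain ⟨e, f, h, rfl⟩ := exists_isHyperbolicFrame hx hxx 2 (by simp)
  refine ⟨h.plane {.inl 0, .inl 1, .inl 2} (by decide) (by decide),
    h.plane {.inr 0, .inr 1, .inl 2} (by decide) (by decide),
    h.plane {.inl 0, .inr 1, .inl 2} (by decide) (by decide),
    h.plane {.inr 0, .inl 1, .inl 2} (by decide) (by decide), ?_, ?_, ?_⟩
  · constructor <;> rw [h.meetRank_plane] <;> decide
  all_goals exact Submodule.subset_span ⟨.inl 2, by simp, rfl⟩

end Quadrangles

/-! ### Semilinear isometries -/

/-- `g` is a `φ`-semilinear isometry of the hermitian form. -/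
structure IsSemilinearIsometry {ι : Type*} [Fintype ι] (φ : RingAut F4)
    (g : Equiv.Perm (ι → F4)) : Prop where
  map_add : ∀ x y, g (x + y) = g x + g y
  map_smul : ∀ (c : F4) x, g (c • x) = φ c • g x
  form_map : ∀ x y, 𝔥 (g x) (g y) = φ (𝔥 x y)

namespace IsSemilinearIsometry

variable {ι : Type*} [Fintype ι] {φ ψ : RingAut F4} {g k : Equiv.Perm (ι → F4)}

lemma one : IsSemilinearIsometry (1 : RingAut F4) (1 : Equiv.Perm (ι → F4)) :=
  ⟨fun _ _ => rfl, fun _ _ => rfl, fun _ _ => rfl⟩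

lemma mul (hg : IsSemilinearIsometry φ g) (hk : IsSemilinearIsometry ψ k) :
    IsSemilinearIsometry (φ * ψ) (g * k) where
  map_add x y := by simp [hg.map_add, hk.map_add]
  map_smul c x := by simp [hg.map_smul, hk.map_smul]
  form_map x y := by simp [hg.form_map, hk.form_map]

lemma inv (hg : IsSemilinearIsometry φ g) : IsSemilinearIsometry φ⁻¹ g⁻¹ where
  map_add x y := g.injective (by simp [hg.map_add])
  map_smul c x := g.injective (by simp [hg.map_smul])
  form_map x y := φ.injective (by rw [← hg.form_map]; simp)

end IsSemilinearIsometry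

/-- The group `ΓU` of semilinear isometries, each recorded with its field automorphism. -/
def gammaU (ι : Type*) [Fintype ι] : Subgroup (RingAut F4 × Equiv.Perm (ι → F4)) where
  carrier := {p | IsSemilinearIsometry p.1 p.2}
  one_mem' := .one
  mul_mem' := .mul
  inv_mem' := .inv

namespace IsHyperbolicFrame

variable {ι κ : Type*} [Fintype ι] [Fintype κ] [DecidableEq κ] {e f e' f' : κ → ι → F4}

lemma exists_isSemilinearIsometry_hyperbolicMap (h : IsHyperbolicFrame e f)
    (h' : IsHyperbolicFrame e' f') (hcard : 2 * Fintype.card κ = Fintype.card ι)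
    (φ : RingAut F4) :
    ∃ g, IsSemilinearIsometry φ g ∧
      ∀ a b, g (hyperbolicMap e f (a, b)) = hyperbolicMap e' f' (φ ∘ a, φ ∘ b) := by
  let H := Equiv.ofBijective _ (h.hyperbolicMap_bijective hcard)
  let H' := Equiv.ofBijective _ (h'.hyperbolicMap_bijective hcard)
  let Φ : (κ → F4) × (κ → F4) ≃ (κ → F4) × (κ → F4) :=
    (Equiv.piCongrRight fun _ => φ.toEquiv).prodCongr (Equiv.piCongrRight fun _ => φ.toEquiv)
  let g : Equiv.Perm (ι → F4) := (H.symm.trans Φ).trans H'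
  have hg (a b : κ → F4) :
      g (hyperbolicMap e f (a, b)) = hyperbolicMap e' f' (φ ∘ a, φ ∘ b) :=
    congrArg (fun p => H' (Φ p)) (H.symm_apply_apply (a, b))
  have form_comp (a b : κ → F4) : 𝔥 (φ ∘ a) (φ ∘ b) = φ (𝔥 a b) := by
    simp [hermitianForm_apply]
  refine ⟨g, ⟨fun x y => ?_, fun c x => ?_, fun x y => ?_⟩, hg⟩
  · obtain ⟨⟨a, b⟩, rfl⟩ := H.surjective x
    obtain ⟨⟨a', b'⟩, rfl⟩ := H.surjective y
    have hφ (u v : κ → F4) : φ ∘ (u + v) = φ ∘ u + φ ∘ v := funext fun i => map_add φ _ _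
    simp only [H, Equiv.ofBijective_apply]
    rw [← map_add, Prod.mk_add_mk, hg, hg, hg, ← map_add, Prod.mk_add_mk, hφ, hφ]
  · obtain ⟨⟨a, b⟩, rfl⟩ := H.surjective x
    have hφ (u : κ → F4) : φ ∘ (c • u) = φ c • (φ ∘ u) := funext fun i => map_mul φ _ _
    simp only [H, Equiv.ofBijective_apply]
    rw [← map_smul, Prod.smul_mk, hg, hg, ← map_smul, Prod.smul_mk, hφ, hφ]
  · obtain ⟨⟨a, b⟩, rfl⟩ := H.surjective x
    obtain ⟨⟨a', b'⟩, rfl⟩ := H.surjective y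
    simp only [H, Equiv.ofBijective_apply]
    rw [hg, hg, h.form_hyperbolicMap, h'.form_hyperbolicMap, form_comp, form_comp, map_add]

lemma exists_isSemilinearIsometry (h : IsHyperbolicFrame e f) (h' : IsHyperbolicFrame e' f')
    (hcard : 2 * Fintype.card κ = Fintype.card ι) (φ : RingAut F4) :
    ∃ g, IsSemilinearIsometry φ g ∧ (∀ i, g (e i) = e' i) ∧ ∀ i, g (f i) = f' i := by
  obtain ⟨g, hg, hmap⟩ := h.exists_isSemilinearIsometry_hyperbolicMap h' hcard φ
  have hsingle (i : κ) : φ ∘ Pi.single i 1 = Pi.single i 1 := by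
    ext j
    simp [Pi.single_apply, apply_ite φ]
  have hzero : φ ∘ (0 : κ → F4) = 0 := funext fun _ => map_zero φ
  refine ⟨g, hg, fun i => ?_, fun i => ?_⟩
  · rw [← hyperbolicMap_single_left (e := e) (f := f), hmap, hsingle, hzero,
      hyperbolicMap_single_left]
  · rw [← hyperbolicMap_single_right (e := e) (f := f), hmap, hsingle, hzero,
      hyperbolicMap_single_right]

end IsHyperbolicFrame

namespace gammaU

variable {ι : Type*} [Fintype ι]

/-- The `φ`-semilinear map underlying an element `(φ, g)` of `ΓU`. -/
def toLinearMap (g : gammaU ι) : (ι → F4) →ₛₗ[(g.1.1 : F4 →+* F4)] (ι → F4) where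
  toFun := g.1.2
  map_add' := g.2.map_add
  map_smul' := g.2.map_smul

/-- The image of a subspace under a semilinear isometry, encoded as the preimage under its
inverse. -/
noncomputable def mapSubmodule (g : gammaU ι) (W : Submodule F4 (ι → F4)) : Submodule F4 (ι → F4) :=
  W.comap (toLinearMap g⁻¹)

lemma mem_mapSubmodule {g : gammaU ι} {W : Submodule F4 (ι → F4)} {x : ι → F4} :
    x ∈ mapSubmodule g W ↔ g.1.2⁻¹ x ∈ W := Iff.rfl

lemma coe_mapSubmodule (g : gammaU ι) (W : Submodule F4 (ι → F4)) :
    (mapSubmodule g W : Set (ι → F4)) = g.1.2 '' W :=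
  (Equiv.image_eq_preimage_symm g.1.2 W).symm

lemma apply_mem_mapSubmodule {g : gammaU ι} {W : Submodule F4 (ι → F4)} {x : ι → F4} :
    g.1.2 x ∈ mapSubmodule g W ↔ x ∈ W := by
  simp [mem_mapSubmodule]

lemma finrank_mapSubmodule (g : gammaU ι) (W : Submodule F4 (ι → F4)) :
    Module.finrank F4 (mapSubmodule g W) = Module.finrank F4 W := by
  refine F4.finrank_eq_of_natCard_eq ?_
  rw [← SetLike.coe_sort_coe, coe_mapSubmodule, Nat.card_image_of_injective g.1.2.injective]
  rfl

noncomputable instance : MulAction (gammaU (Fin 6)) FermatPlane where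
  smul g P := .ofIsTotallyIsotropic (mapSubmodule g P.val)
    (fun x hx y hy => by
      have h := g.2.form_map (g.1.2⁻¹ x) (g.1.2⁻¹ y)
      rw [P.isTotallyIsotropic _ (mem_mapSubmodule.1 hx) _ (mem_mapSubmodule.1 hy)] at h
      simpa using h)
    ((finrank_mapSubmodule g P.val).trans P.finrank_val)
  one_smul _ := rfl
  mul_smul _ _ _ := rfl

lemma meetRank_smul (g : gammaU (Fin 6)) (P Q : FermatPlane) :
    (g • P).meetRank (g • Q) = P.meetRank Q :=
  finrank_mapSubmodule g (P.val ⊓ Q.val)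

lemma preservesNuP_toPerm (g : gammaU (Fin 6)) : PreservesNuP (MulAction.toPerm g) :=
  preservesNuP_iff.2 (meetRank_smul g)

end gammaU

/-! ### The action on points -/

open FermatPlane

lemma FermatPlane.exists_smul_eq_of_forall_mem {x y : Fin 6 → F4} (hx : x ≠ 0) (hxx : 𝔥 x x = 0)
    (h : ∀ Q : FermatPlane, x ∈ Q.val → y ∈ Q.val) : ∃ c : F4, c • x = y := by
  obtain ⟨P, P', R, R', hquad, hP, hP'⟩ := exists_isQuadrangle_mem hx hxx
  refine Submodule.mem_span_singleton.1 ?_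
  rw [← inf_eq_span_singleton hquad.meetRank_left hx hP hP']
  exact ⟨h P hP, h P' hP'⟩

lemma FermatPlane.exists_mem_mem_iff {x y : Fin 6 → F4} (hx : 𝔥 x x = 0) (hy : 𝔥 y y = 0) :
    (∃ P : FermatPlane, x ∈ P.val ∧ y ∈ P.val) ↔ 𝔥 x y = 0 :=
  ⟨fun ⟨P, hxP, hyP⟩ => P.isTotallyIsotropic x hxP y hyP, exists_mem_mem hx hy⟩

/-- The permutation `σ` of the planes carries the point `[x]` of the cubic to the point `[y]`, in
the sense that it carries the planes through `[x]` to the planes through `[y]`. -/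
structure MapsPoint (σ : Equiv.Perm FermatPlane) (x y : Fin 6 → F4) : Prop where
  left_ne_zero : x ≠ 0
  right_ne_zero : y ≠ 0
  left_isotropic : 𝔥 x x = 0
  right_isotropic : 𝔥 y y = 0
  mem_iff : ∀ Q : FermatPlane, x ∈ Q.val ↔ y ∈ (σ Q).val

lemma PreservesNuP.exists_mapsPoint {σ : Equiv.Perm FermatPlane} (hσ : PreservesNuP σ)
    {x : Fin 6 → F4} (hx : x ≠ 0) (hxx : 𝔥 x x = 0) : ∃ y, MapsPoint σ x y := by
  rw [preservesNuP_iff] at hσ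
  obtain ⟨P, P', R, R', hquad, hP, hP'⟩ := exists_isQuadrangle_mem hx hxx
  have hquad_map : IsQuadrangle (σ P) (σ P') (σ R) (σ R') := by
    constructor <;> rw [hσ]
    exacts [hquad.meetRank_left, hquad.meetRank_right, hquad.meetRank_fst_fst,
      hquad.meetRank_fst_snd, hquad.meetRank_snd_fst, hquad.meetRank_snd_snd]
  obtain ⟨y, hy, hyP, hyP'⟩ := hquad_map.exists_mem_mem
  refine ⟨y, hx, hy, hxx, (σ P).isTotallyIsotropic y hyP y hyP, fun Q => ?_⟩
  simp only [hquad.mem_iff hx hP hP', hquad_map.mem_iff hy hyP hyP', hσ]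

lemma gammaU.mapsPoint_toPerm (g : gammaU (Fin 6)) {x : Fin 6 → F4} (hx : x ≠ 0)
    (hxx : 𝔥 x x = 0) : MapsPoint (MulAction.toPerm g) x (g.1.2 x) where
  left_ne_zero := hx
  right_ne_zero := (map_ne_zero_iff (toLinearMap g) g.1.2.injective).2 hx
  left_isotropic := hxx
  right_isotropic := by rw [g.2.form_map, hxx, map_zero]
  mem_iff _ := apply_mem_mapSubmodule.symm

namespace MapsPoint

variable {σ τ : Equiv.Perm FermatPlane} {x x' y y' z : Fin 6 → F4}

lemma inv (h : MapsPoint σ x y) : MapsPoint σ⁻¹ y x where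
  left_ne_zero := h.right_ne_zero
  right_ne_zero := h.left_ne_zero
  left_isotropic := h.right_isotropic
  right_isotropic := h.left_isotropic
  mem_iff Q := by simp [h.mem_iff]

lemma mul (hτ : MapsPoint τ y z) (hσ : MapsPoint σ x y) : MapsPoint (τ * σ) x z where
  left_ne_zero := hσ.left_ne_zero
  right_ne_zero := hτ.right_ne_zero
  left_isotropic := hσ.left_isotropic
  right_isotropic := hτ.right_isotropic
  mem_iff Q := (hσ.mem_iff Q).trans (hτ.mem_iff (σ Q))

lemma smul_right (h : MapsPoint σ x y) {c : F4} (hc : c ≠ 0) : MapsPoint σ x (c • y) where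
  left_ne_zero := h.left_ne_zero
  right_ne_zero := smul_ne_zero hc h.right_ne_zero
  left_isotropic := h.left_isotropic
  right_isotropic := by simp [h.right_isotropic]
  mem_iff Q := (h.mem_iff Q).trans (Submodule.smul_mem_iff _ hc).symm

lemma of_smul_right {c : F4} (h : MapsPoint σ x (c • y)) : MapsPoint σ x y := by
  have hc : c ≠ 0 := left_ne_zero_of_smul h.right_ne_zero
  simpa [smul_smul, hc] using h.smul_right (inv_ne_zero hc)

lemma exists_smul_eq (h : MapsPoint σ x y) (h' : MapsPoint σ x z) : ∃ c : F4, c • y = z := by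
  refine exists_smul_eq_of_forall_mem h.right_ne_zero h.right_isotropic fun Q hQ => ?_
  obtain ⟨P, rfl⟩ := σ.surjective Q
  exact (h'.mem_iff P).1 ((h.mem_iff P).2 hQ)

lemma form_eq_zero_iff (h : MapsPoint σ x y) (h' : MapsPoint σ x' y') :
    𝔥 x x' = 0 ↔ 𝔥 y y' = 0 := by
  rw [← exists_mem_mem_iff h.left_isotropic h'.left_isotropic,
    ← exists_mem_mem_iff h.right_isotropic h'.right_isotropic]
  simp only [h.mem_iff, h'.mem_iff]
  exact (σ.surjective.exists (p := fun P => y ∈ P.val ∧ y' ∈ P.val)).symm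

end MapsPoint

lemma FermatPlane.eq_one_of_forall_mapsPoint {τ : Equiv.Perm FermatPlane}
    (h : ∀ x ≠ 0, 𝔥 x x = 0 → MapsPoint τ x x) : τ = 1 := by
  refine Equiv.ext fun Q => ?_
  have hle : Q.val ≤ (τ Q).val := fun x hx => by
    rcases eq_or_ne x 0 with rfl | hx0
    · exact Submodule.zero_mem _
    · exact ((h x hx0 (Q.isTotallyIsotropic x hx x hx)).mem_iff Q).1 hx
  exact (Subtype.ext <| Submodule.eq_of_le_of_finrank_eq hle
    (Q.finrank_val.trans (τ Q).finrank_val.symm)).symm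

section Frames

variable {σ : Equiv.Perm FermatPlane} {e f e' f' : Fin 3 → Fin 6 → F4}

/-- `σ` carries the points of the frame `e, f` to those of the frame `e', f'`. -/
structure MapsFrame (σ : Equiv.Perm FermatPlane) (e f e' f' : Fin 3 → Fin 6 → F4) : Prop where
  source : IsHyperbolicFrame e f
  target : IsHyperbolicFrame e' f'
  left : ∀ i, MapsPoint σ (e i) (e' i)
  right : ∀ i, MapsPoint σ (f i) (f' i)

lemma PreservesNuP.exists_mapsFrame (hσ : PreservesNuP σ) (h : IsHyperbolicFrame e f) :
    ∃ e' f', MapsFrame σ e f e' f' := by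
  choose e' he' using fun i => hσ.exists_mapsPoint (h.ne_zero i) (h.left i i)
  choose f' hf' using fun i => hσ.exists_mapsPoint (h.symm.ne_zero i) (h.right i i)
  have pairing_ne_zero (i : Fin 3) : 𝔥 (e' i) (f' i) ≠ 0 := fun h0 => by
    simpa [h.left_right] using ((he' i).form_eq_zero_iff (hf' i)).2 h0
  have inv_ne_zero (i : Fin 3) := inv_ne_zero (pairing_ne_zero i)
  refine ⟨e', fun i => (𝔥 (e' i) (f' i))⁻¹ • f' i, h, ⟨fun i j => ?_, fun i j => ?_, fun i j => ?_⟩,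
    he', fun i => (hf' i).smul_right (inv_ne_zero i)⟩
  · exact ((he' i).form_eq_zero_iff (he' j)).1 (h.left i j)
  · simp [((hf' i).form_eq_zero_iff (hf' j)).1 (h.right i j)]
  · rw [map_smul]
    split_ifs with hij
    · rw [hij, smul_eq_mul, inv_mul_cancel₀ (pairing_ne_zero j)]
    · rw [((he' i).form_eq_zero_iff (hf' j)).1 ((h.left_right i j).trans (if_neg hij)), smul_zero]

namespace MapsFrame

lemma symm (h : MapsFrame σ e f e' f') : MapsFrame σ f e f' e' :=
  ⟨h.source.symm, h.target.symm, h.right, h.left⟩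

lemma smul (h : MapsFrame σ e f e' f') {u : Fin 3 → F4} (hu : ∀ i, u i ≠ 0) :
    MapsFrame σ e f (fun i => u i • e' i) (fun i => u i • f' i) :=
  ⟨h.source, h.target.smul hu, fun i => (h.left i).smul_right (hu i),
    fun i => (h.right i).smul_right (hu i)⟩

lemma exists_coordinates (h : MapsFrame σ e f e' f') {a b : Fin 3 → F4} {y : Fin 6 → F4}
    (hy : MapsPoint σ (hyperbolicMap e f (a, b)) y) :
    ∃ a' b', y = hyperbolicMap e' f' (a', b') ∧
      (∀ i, a i = 0 ↔ a' i = 0) ∧ ∀ i, b i = 0 ↔ b' i = 0 := by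
  refine ⟨_, _, h.target.eq_hyperbolicMap (by simp) y, fun i => ?_, fun i => ?_⟩
  · rw [← (h.right i).form_eq_zero_iff hy, h.source.form_right_hyperbolicMap]
  · rw [← (h.left i).form_eq_zero_iff hy, h.source.form_left_hyperbolicMap]

lemma exists_mapsPoint_add_smul (h : MapsFrame σ e f e' f') (hσ : PreservesNuP σ) {i j : Fin 3}
    (hij : i ≠ j) {t : F4} (ht : t ≠ 0) :
    ∃ c : F4, c ≠ 0 ∧ MapsPoint σ (e i + t • e j) (e' i + c • e' j) := by
  let a : Fin 3 → F4 := Pi.single i 1 + t • Pi.single j 1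
  have ha : hyperbolicMap e f (a, 0) = e i + t • e j := by
    rw [← hyperbolicMap_single_left (e := e) (f := f) i,
      ← hyperbolicMap_single_left (e := e) (f := f) j, ← map_smul, ← map_add]
    simp [a]
  have hai : a i ≠ 0 := by simp [a, hij]
  have hne : hyperbolicMap e f (a, 0) ≠ 0 := fun h0 => hai <| by
    rw [← h.source.form_right_hyperbolicMap i a 0, h0, map_zero]
  obtain ⟨y, hy⟩ := hσ.exists_mapsPoint hne (by simp [h.source.form_hyperbolicMap])
  obtain ⟨a', b', rfl, ha', hb'⟩ := h.exists_coordinates hy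
  have ha'i : a' i ≠ 0 := (ha' i).not.1 hai
  have ha'j : a' j ≠ 0 := (ha' j).not.1 (by simp [a, hij.symm, ht])
  refine ⟨(a' i)⁻¹ * a' j, mul_ne_zero (inv_ne_zero ha'i) ha'j, ?_⟩
  have hy' : hyperbolicMap e' f' (a', b') = a' i • (e' i + ((a' i)⁻¹ * a' j) • e' j) := by
    have hzero (k : Fin 3) (hk : k ≠ i ∧ k ≠ j) : a' k • e' k = 0 := by
      rw [(ha' k).1 (by simp [a, hk.1, hk.2]), zero_smul]
    rw [hyperbolicMap_apply, Fintype.sum_eq_add i j hij hzero,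
      Finset.sum_eq_zero fun k _ => by rw [(hb' k).1 rfl, zero_smul], add_zero, smul_add, smul_smul,
      mul_inv_cancel_left₀ ha'i]
  exact (ha ▸ hy' ▸ hy).of_smul_right

end MapsFrame

lemma PreservesNuP.exists_mapsFrame_normalized (hσ : PreservesNuP σ)
    (h : IsHyperbolicFrame e f) :
    ∃ e' f', MapsFrame σ e f e' f' ∧ ∀ i ≠ 0, MapsPoint σ (e 0 + e i) (e' 0 + e' i) := by
  obtain ⟨e', f', hframe⟩ := hσ.exists_mapsFrame h
  have (i : Fin 3) : ∃ c : F4, c ≠ 0 ∧ (i = 0 → c = 1) ∧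
      (i ≠ 0 → MapsPoint σ (e 0 + e i) (e' 0 + c • e' i)) := by
    rcases eq_or_ne i 0 with rfl | hi
    · exact ⟨1, one_ne_zero, by simp, by simp⟩
    · obtain ⟨c, hc, hmap⟩ := hframe.exists_mapsPoint_add_smul hσ hi.symm one_ne_zero
      exact ⟨c, hc, by simp [hi], fun _ => by rwa [one_smul] at hmap⟩
  choose u hu hu0 hmap using this
  refine ⟨_, _, hframe.smul hu, fun i hi => ?_⟩
  simpa only [hu0 0 rfl, one_smul] using hmap i hi

end Frames

/-! ### Rigidity -/

lemma linearIndependent_pair_single {ι K : Type*} [DecidableEq ι] [DivisionRing K] {u : ι → K}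
    {i k : ι} (hik : i ≠ k) (hu : u i ≠ 0) : LinearIndependent K ![u, Pi.single k 1] := by
  refine LinearIndependent.pair_iff.2 fun s t hst => ?_
  have hs : s = 0 := by simpa [hik, hu] using congrFun hst i
  exact ⟨hs, by simpa [hs] using congrFun hst k⟩

lemma hermitianForm_update_zero {v x : Fin 3 → F4} (hv : ∀ i, v i ≠ 0) {k : Fin 3}
    (hx : ∀ i ≠ k, x i = v i) : 𝔥 (Function.update v k 0) x = 0 := by
  have h3 (i : Fin 3) : v i ^ 2 * v i = 1 := by rw [← pow_succ, F4.pow_three (hv i)]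
  fin_cases k <;>
    simp [hermitianForm_apply, Fin.sum_univ_three, h3, hx, CharTwo.add_self_eq_zero]

section UpdateVec

variable {R : Type*} [Zero R] (x y z : R)

lemma update_vec_zero : Function.update ![x, y, z] 0 0 = ![0, y, z] := by
  ext i
  fin_cases i <;> simp

lemma update_vec_one : Function.update ![x, y, z] 1 0 = ![x, 0, z] := by
  ext i
  fin_cases i <;> simp

lemma update_vec_two : Function.update ![x, y, z] 2 0 = ![x, y, 0] := by
  ext i
  fin_cases i <;> simp

end UpdateVec

/-- A set of vectors of `F₄³` which, with two independent vectors, contains every nonzero vector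
orthogonal to both. -/
def IsOrthogonallyClosed (C : Set (Fin 3 → F4)) : Prop :=
  ∀ ⦃u v⦄, u ∈ C → v ∈ C → LinearIndependent F4 ![u, v] →
    ∀ ⦃x⦄, x ≠ 0 → 𝔥 u x = 0 → 𝔥 v x = 0 → x ∈ C

namespace IsOrthogonallyClosed

variable {C : Set (Fin 3 → F4)} {v : Fin 3 → F4} {k l : Fin 3}

lemma mem_of_update_mem (hC : IsOrthogonallyClosed C) (hv : ∀ i, v i ≠ 0) (hkl : k ≠ l)
    (hk : Function.update v k 0 ∈ C) (hl : Function.update v l 0 ∈ C) : v ∈ C := by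
  refine hC hk hl (LinearIndependent.pair_iff.2 fun s t hst => ⟨?_, ?_⟩)
    (fun h => hv 0 (congrFun h 0)) (hermitianForm_update_zero hv fun _ _ => rfl)
    (hermitianForm_update_zero hv fun _ _ => rfl)
  · simpa [hkl.symm, hv] using congrFun hst l
  · simpa [hkl, hv] using congrFun hst k

lemma update_mem_of_update_mem (hC : IsOrthogonallyClosed C) (hsingle : ∀ i, Pi.single i 1 ∈ C)
    (hv : ∀ i, v i ≠ 0) (hkl : k ≠ l) (hk : Function.update v k 0 ∈ C)
    (hl : Function.update v l 0 ∈ C) (m : Fin 3) : Function.update v m 0 ∈ C := by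
  obtain ⟨i, hi⟩ := exists_ne m
  refine hC (hC.mem_of_update_mem hv hkl hk hl) (hsingle m)
    (linearIndependent_pair_single hi (hv i)) (fun h => hv i ?_)
    (hermitianForm_isRefl _ _ (hermitianForm_update_zero hv fun _ _ => rfl))
    (by simp [hermitianForm_single_left])
  simpa [hi] using congrFun h i

lemma update_smul_mem (hC : IsOrthogonallyClosed C) (hsingle : ∀ i, Pi.single i 1 ∈ C)
    (hv : ∀ i, v i ≠ 0) (h : Function.update v k 0 ∈ C) {c : F4} (hc : c ≠ 0) :
    Function.update (c • v) k 0 ∈ C := by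
  obtain ⟨i, hi⟩ := exists_ne k
  have hself : 𝔥 (Function.update v k 0) (Function.update v k 0) = 0 :=
    hermitianForm_update_zero hv fun j hj => by simp [hj]
  have hsmul : Function.update (c • v) k 0 = c • Function.update v k 0 := by
    rw [← Function.update_smul, smul_zero]
  have hi0 : Function.update v k 0 i ≠ 0 := by simpa [hi] using hv i
  rw [hsmul]
  refine hC h (hsingle k) (linearIndependent_pair_single hi hi0)
    (smul_ne_zero hc fun h0 => hi0 (congrFun h0 i)) (by simp [hself])
    (by simp [hermitianForm_single_left])

-- `![1, c, d]` is orthogonal to its three truncations, and two of these determine the third.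
lemma third_mem (hC : IsOrthogonallyClosed C) (hsingle : ∀ i, Pi.single i 1 ∈ C) {c d : F4}
    (hc : c ≠ 0) (hd : d ≠ 0) :
    (![1, c, 0] ∈ C → ![1, 0, d] ∈ C → ![0, c, d] ∈ C) ∧
      (![1, c, 0] ∈ C → ![0, c, d] ∈ C → ![1, 0, d] ∈ C) ∧
      (![1, 0, d] ∈ C → ![0, c, d] ∈ C → ![1, c, 0] ∈ C) := by
  have hv : ∀ i, ![1, c, d] i ≠ 0 := by simp [Fin.forall_fin_succ, hc, hd]
  have third {k l : Fin 3} := hC.update_mem_of_update_mem hsingle hv (k := k) (l := l)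
  rw [← update_vec_zero 1, ← update_vec_one 1 c, ← update_vec_two 1 c d]
  exact ⟨fun h h' => third (by decide) h h' 0, fun h h' => third (by decide) h h' 1,
    fun h h' => third (by decide) h h' 2⟩

lemma smul_mem_of_first_eq_zero (hC : IsOrthogonallyClosed C) (hsingle : ∀ i, Pi.single i 1 ∈ C)
    {c d s : F4} (hc : c ≠ 0) (hd : d ≠ 0) (hs : s ≠ 0) (h : ![0, c, d] ∈ C) :
    ![0, s * c, s * d] ∈ C := by
  have hv : ∀ i, ![1, c, d] i ≠ 0 := by simp [Fin.forall_fin_succ, hc, hd]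
  rw [← update_vec_zero 1] at h
  simpa [update_vec_zero] using hC.update_smul_mem hsingle hv h hs

lemma mem_of_middle_eq_zero (hC : IsOrthogonallyClosed C) (hsingle : ∀ i, Pi.single i 1 ∈ C)
    (h110 : ![1, 1, 0] ∈ C) (h101 : ![1, 0, 1] ∈ C) {w : F4} (hw0 : w ≠ 0) (hw1 : w ≠ 1)
    (h1w0 : ![1, w, 0] ∈ C) {d : F4} (hd : d ≠ 0) : ![1, 0, d] ∈ C := by
  have third {c d : F4} := hC.third_mem hsingle (c := c) (d := d)
  have scale {c d s : F4} := hC.smul_mem_of_first_eq_zero hsingle (c := c) (d := d) (s := s)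
  have h10w : ![1, 0, w] ∈ C := by
    have h011 := (third one_ne_zero one_ne_zero).1 h110 h101
    refine (third hw0 hw0).2.1 h1w0 ?_
    simpa using scale one_ne_zero one_ne_zero hw0 h011
  have h10w' : ![1, 0, w ^ 2] ∈ C := by
    have h0w1 := (third hw0 one_ne_zero).1 h1w0 h101
    refine (third one_ne_zero (pow_ne_zero 2 hw0)).2.1 h110 ?_
    have h := scale hw0 one_ne_zero (pow_ne_zero 2 hw0) h0w1
    rwa [← pow_succ, F4.pow_three hw0, mul_one] at h
  rcases eq_or_ne d 1 with rfl | hd1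
  · exact h101
  rcases F4.eq_or_eq_sq hw0 hw1 hd hd1 with rfl | rfl
  exacts [h10w, h10w']

lemma mem_of_last_eq_zero (hC : IsOrthogonallyClosed C) (hsingle : ∀ i, Pi.single i 1 ∈ C)
    (h110 : ![1, 1, 0] ∈ C) (h101 : ∀ d : F4, d ≠ 0 → ![1, 0, d] ∈ C) {c : F4} (hc : c ≠ 0) :
    ![1, c, 0] ∈ C := by
  refine (hC.third_mem hsingle hc one_ne_zero).2.2 (h101 1 one_ne_zero) ?_
  have h := (hC.third_mem hsingle one_ne_zero (inv_ne_zero hc)).1 h110 (h101 _ (inv_ne_zero hc))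
  simpa [hc] using hC.smul_mem_of_first_eq_zero hsingle one_ne_zero (inv_ne_zero hc) hc h

lemma update_mem (hC : IsOrthogonallyClosed C) (hsingle : ∀ i, Pi.single i 1 ∈ C)
    (h1c0 : ∀ c : F4, c ≠ 0 → ![1, c, 0] ∈ C) (h10d : ∀ d : F4, d ≠ 0 → ![1, 0, d] ∈ C)
    (hv : ∀ i, v i ≠ 0) (m : Fin 3) : Function.update v m 0 ∈ C := by
  have hc : (v 0)⁻¹ * v 1 ≠ 0 := mul_ne_zero (inv_ne_zero (hv 0)) (hv 1)
  have hd : (v 0)⁻¹ * v 2 ≠ 0 := mul_ne_zero (inv_ne_zero (hv 0)) (hv 2)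
  have h1cd : ∀ i, ![1, (v 0)⁻¹ * v 1, (v 0)⁻¹ * v 2] i ≠ 0 := by
    simp [Fin.forall_fin_succ, hv]
  have hsmul : v = v 0 • ![1, (v 0)⁻¹ * v 1, (v 0)⁻¹ * v 2] := by
    ext i
    fin_cases i <;> simp [hv]
  rw [hsmul]
  refine hC.update_smul_mem hsingle h1cd ?_ (hv 0)
  refine hC.update_mem_of_update_mem hsingle h1cd (k := 1) (l := 2) (by decide) ?_ ?_ m
  · exact update_vec_one (1 : F4) _ _ ▸ h10d _ hd
  · exact update_vec_two (1 : F4) _ _ ▸ h1c0 _ hc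

lemma mem_of_generators (hC : IsOrthogonallyClosed C) (hsingle : ∀ i, Pi.single i 1 ∈ C)
    (h110 : ![1, 1, 0] ∈ C) (h101 : ![1, 0, 1] ∈ C) {w : F4} (hw0 : w ≠ 0) (hw1 : w ≠ 1)
    (h1w0 : ![1, w, 0] ∈ C) {x : Fin 3 → F4} (hx : x ≠ 0) : x ∈ C := by
  have h10d (d : F4) := hC.mem_of_middle_eq_zero hsingle h110 h101 hw0 hw1 h1w0 (d := d)
  have h1c0 (c : F4) := hC.mem_of_last_eq_zero hsingle h110 h10d (c := c)
  by_cases! hzero : ∀ k, x k ≠ 0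
  · exact hC.mem_of_update_mem hzero (k := 0) (l := 1) (by decide)
      (hC.update_mem hsingle h1c0 h10d hzero 0) (hC.update_mem hsingle h1c0 h10d hzero 1)
  obtain ⟨k, hk⟩ := hzero
  by_cases! hzero' : ∃ l ≠ k, x l = 0
  · obtain ⟨l, hlk, hl⟩ := hzero'
    exact hC (hsingle l) (hsingle k) (linearIndependent_pair_single hlk (by simp)) hx
      (by rwa [hermitianForm_single_left]) (by rwa [hermitianForm_single_left])
  · have hne (i : Fin 3) : Function.update x k 1 i ≠ 0 := by
      rcases eq_or_ne i k with rfl | hi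
      · simp
      · simpa [hi] using hzero' i hi
    simpa [← hk] using hC.update_mem hsingle h1c0 h10d hne k

end IsOrthogonallyClosed

/-- The permutation `τ` fixes the point with coordinates `(a, b)` in the frame `e, f`. -/
def FixesPoint (τ : Equiv.Perm FermatPlane) (e f : Fin 3 → Fin 6 → F4) (a b : Fin 3 → F4) :
    Prop :=
  MapsPoint τ (hyperbolicMap e f (a, b)) (hyperbolicMap e f (a, b))

lemma fixesPoint_swap {τ : Equiv.Perm FermatPlane} {e f : Fin 3 → Fin 6 → F4} {a b : Fin 3 → F4} :
    FixesPoint τ f e b a ↔ FixesPoint τ e f a b := by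
  rw [FixesPoint, hyperbolicMap_swap, FixesPoint]

namespace MapsFrame

variable {τ : Equiv.Perm FermatPlane} {e f : Fin 3 → Fin 6 → F4} {a b u v : Fin 3 → F4}

lemma exists_mapsPoint_hyperbolicMap (h : MapsFrame τ e f e f) (hτ : PreservesNuP τ)
    (hne : (a, b) ≠ 0) (hab : 𝔥 a b + 𝔥 b a = 0) :
    ∃ a' b', MapsPoint τ (hyperbolicMap e f (a, b)) (hyperbolicMap e f (a', b')) ∧
      (∀ i, a i = 0 ↔ a' i = 0) ∧ ∀ i, b i = 0 ↔ b' i = 0 := by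
  obtain ⟨y, hy⟩ := hτ.exists_mapsPoint
    ((map_ne_zero_iff _ h.source.hyperbolicMap_injective).2 hne)
    ((h.source.form_hyperbolicMap a b a b).trans hab)
  obtain ⟨a', b', rfl, ha', hb'⟩ := h.exists_coordinates hy
  exact ⟨a', b', hy, ha', hb'⟩

lemma fixesPoint_right (h : MapsFrame τ e f e f) (hτ : PreservesNuP τ)
    (hu : FixesPoint τ e f u 0) (hv : FixesPoint τ e f v 0) (huv : LinearIndependent F4 ![u, v])
    (ha : a ≠ 0) (hua : 𝔥 u a = 0) (hva : 𝔥 v a = 0) : FixesPoint τ e f 0 a := by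
  obtain ⟨b, a', hmap, hb, -⟩ :=
    h.exists_mapsPoint_hyperbolicMap hτ (a := 0) (b := a) (by simpa using ha) (by simp)
  obtain rfl : b = 0 := funext fun i => (hb i).1 rfl
  have orthogonal {u : Fin 3 → F4} (hu : FixesPoint τ e f u 0) (hua : 𝔥 u a = 0) :
      𝔥 u a' = 0 := by
    simpa [h.source.form_hyperbolicMap, hua] using hu.form_eq_zero_iff hmap
  obtain ⟨c, rfl⟩ := exists_smul_eq_of_linearIndependent huv (y := a') (by simp) ha
    (by simp [Fin.forall_fin_two, hua, hva])
    (by simp [Fin.forall_fin_two, orthogonal hu hua, orthogonal hv hva])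
  refine MapsPoint.of_smul_right (c := c) ?_
  rwa [← map_smul, Prod.smul_mk, smul_zero]

lemma isOrthogonallyClosed (h : MapsFrame τ e f e f) (hτ : PreservesNuP τ) :
    IsOrthogonallyClosed {a | FixesPoint τ e f a 0 ∧ FixesPoint τ e f 0 a} := by
  rintro u v ⟨hu, hu'⟩ ⟨hv, hv'⟩ huv a ha hua hva
  refine ⟨?_, h.fixesPoint_right hτ hu hv huv ha hua hva⟩
  rw [← fixesPoint_swap] at hu' hv' ⊢
  exact h.symm.fixesPoint_right hτ hu' hv' huv ha hua hva

lemma fixesPoint_update_zero (h : MapsFrame τ e f e f) (hτ : PreservesNuP τ) {k : Fin 3}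
    (hv : ∀ i, v i ≠ 0) (hfix : FixesPoint τ e f (Function.update v k 0) 0) :
    FixesPoint τ e f (Function.update v k 0) 0 ∧ FixesPoint τ e f 0 (Function.update v k 0) := by
  obtain ⟨i, hi⟩ := exists_ne k
  have hi0 : Function.update v k 0 i ≠ 0 := by simpa [hi] using hv i
  have hk : FixesPoint τ e f (Pi.single k 1) 0 := by
    simpa only [FixesPoint, hyperbolicMap_single_left] using h.left k
  exact ⟨hfix, h.fixesPoint_right hτ hfix hk (linearIndependent_pair_single hi hi0)
    (fun h0 => hi0 (congrFun h0 i)) (hermitianForm_update_zero hv fun j hj => by simp [hj])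
    (by simp [hermitianForm_single_left])⟩

lemma fixesPoint_axes (h : MapsFrame τ e f e f) (hτ : PreservesNuP τ)
    (h01 : MapsPoint τ (e 0 + e 1) (e 0 + e 1)) (h02 : MapsPoint τ (e 0 + e 2) (e 0 + e 2))
    {w : F4} (hw0 : w ≠ 0) (hw1 : w ≠ 1) (h0w : MapsPoint τ (e 0 + w • e 1) (e 0 + w • e 1))
    (ha : a ≠ 0) : FixesPoint τ e f a 0 ∧ FixesPoint τ e f 0 a := by
  have hvec (x y z : F4) : hyperbolicMap e f (![x, y, z], 0) = x • e 0 + y • e 1 + z • e 2 := by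
    simp [hyperbolicMap_apply, Fin.sum_univ_three]
  have hne {c : F4} (hc : c ≠ 0) : ∀ i, ![1, c, 1] i ≠ 0 := by simp [Fin.forall_fin_succ, hc]
  refine (h.isOrthogonallyClosed hτ).mem_of_generators (fun i => ⟨?_, ?_⟩) ?_ ?_ hw0 hw1 ?_ ha
  · simpa only [FixesPoint, hyperbolicMap_single_left] using h.left i
  · simpa only [FixesPoint, hyperbolicMap_single_right] using h.right i
  · have := h.fixesPoint_update_zero hτ (k := 2) (hne one_ne_zero)
    rw [update_vec_two] at this
    exact this (by simpa [FixesPoint, hvec] using h01)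
  · have := h.fixesPoint_update_zero hτ (k := 1) (hne one_ne_zero)
    rw [update_vec_one] at this
    exact this (by simpa [FixesPoint, hvec] using h02)
  · have := h.fixesPoint_update_zero hτ (k := 2) (hne hw0)
    rw [update_vec_two] at this
    exact this (by simpa [FixesPoint, hvec] using h0w)

lemma exists_mapsPoint_smul_right (h : MapsFrame τ e f e f) (hτ : PreservesNuP τ)
    (haxes : ∀ a ≠ 0, FixesPoint τ e f a 0 ∧ FixesPoint τ e f 0 a) (ha : a ≠ 0) (hb : b ≠ 0)
    (hab : 𝔥 a b + 𝔥 b a = 0) :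
    ∃ c : F4, c ≠ 0 ∧ MapsPoint τ (hyperbolicMap e f (a, b)) (hyperbolicMap e f (a, c • b)) := by
  obtain ⟨a', b', hmap, ha', hb'⟩ := h.exists_mapsPoint_hyperbolicMap hτ (by simp [ha]) hab
  obtain ⟨r, rfl⟩ : ∃ r : F4, r • a = a' := exists_smul_eq_of_forall_orthogonal fun d hd => by
    rcases eq_or_ne d 0 with rfl | hd0
    · simp
    · simpa [h.source.form_hyperbolicMap, hd] using (haxes d hd0).2.form_eq_zero_iff hmap
  obtain ⟨s, rfl⟩ : ∃ s : F4, s • b = b' := exists_smul_eq_of_forall_orthogonal fun d hd => by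
    rcases eq_or_ne d 0 with rfl | hd0
    · simp
    · simpa [h.source.form_hyperbolicMap, hd] using (haxes d hd0).1.form_eq_zero_iff hmap
  obtain ⟨i, hi⟩ := Function.ne_iff.1 ha
  obtain ⟨j, hj⟩ := Function.ne_iff.1 hb
  have hr : r ≠ 0 := left_ne_zero_of_mul ((ha' i).not.1 hi)
  have hs : s ≠ 0 := left_ne_zero_of_mul ((hb' j).not.1 hj)
  refine ⟨r⁻¹ * s, mul_ne_zero (inv_ne_zero hr) hs, MapsPoint.of_smul_right (c := r) ?_⟩
  rwa [← map_smul, Prod.smul_mk, smul_smul, mul_inv_cancel_left₀ hr]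

lemma fixesPoint_of_form_eq_one (h : MapsFrame τ e f e f) (hτ : PreservesNuP τ)
    (haxes : ∀ a ≠ 0, FixesPoint τ e f a 0 ∧ FixesPoint τ e f 0 a) (hab : 𝔥 a b = 1) :
    FixesPoint τ e f a b := by
  have hba : 𝔥 b a = 1 := by rw [hermitianForm_comm, hab, one_pow]
  have ha : a ≠ 0 := fun h0 => by simp [h0] at hab
  have hb : b ≠ 0 := fun h0 => by simp [h0] at hab
  obtain ⟨c, hc, hmap⟩ := h.exists_mapsPoint_smul_right hτ haxes ha hb
    (by rw [hab, hba, CharTwo.add_self_eq_zero])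
  have hiso := hmap.right_isotropic
  rw [h.source.form_hyperbolicMap, map_smul, hermitianForm_smul_left, hab, hba, smul_eq_mul,
    mul_one] at hiso
  obtain rfl : c = 1 := by grind
  rwa [one_smul] at hmap

lemma fixesPoint_of_form_eq_zero (h : MapsFrame τ e f e f) (hτ : PreservesNuP τ)
    (haxes : ∀ a ≠ 0, FixesPoint τ e f a 0 ∧ FixesPoint τ e f 0 a) (ha : a ≠ 0) (hb : b ≠ 0)
    (hab : 𝔥 a b = 0) : FixesPoint τ e f a b := by
  obtain ⟨r, -, hmap⟩ := h.exists_mapsPoint_smul_right hτ haxes ha hb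
    (by rw [hermitianForm_comm b, hab, zero_pow two_ne_zero, add_zero])
  obtain ⟨c, d, hcd, hda, hcb⟩ := exists_pair_hermitianForm_eq_one ha hb hab
  have hiff := (h.fixesPoint_of_form_eq_one hτ haxes hcd).form_eq_zero_iff hmap
  rw [h.source.form_hyperbolicMap, h.source.form_hyperbolicMap, map_smul, hcb, hda, smul_eq_mul,
    mul_one] at hiff
  obtain rfl : r = 1 := by grind
  rwa [one_smul] at hmap

lemma eq_one_of_generators (h : MapsFrame τ e f e f) (hτ : PreservesNuP τ)
    (h01 : MapsPoint τ (e 0 + e 1) (e 0 + e 1)) (h02 : MapsPoint τ (e 0 + e 2) (e 0 + e 2))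
    {w : F4} (hw0 : w ≠ 0) (hw1 : w ≠ 1) (h0w : MapsPoint τ (e 0 + w • e 1) (e 0 + w • e 1)) :
    τ = 1 := by
  have haxes (a : Fin 3 → F4) (ha : a ≠ 0) := h.fixesPoint_axes hτ h01 h02 hw0 hw1 h0w ha
  refine eq_one_of_forall_mapsPoint fun x hx hxx => ?_
  obtain ⟨⟨a, b⟩, rfl⟩ := (h.source.hyperbolicMap_bijective (by simp)).2 x
  change FixesPoint τ e f a b
  rcases eq_or_ne a 0 with rfl | ha
  · exact (haxes b (fun hb => hx (by rw [hb, ← Prod.zero_eq_mk, map_zero]))).2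
  rcases eq_or_ne b 0 with rfl | hb
  · exact (haxes a ha).1
  rw [h.source.form_hyperbolicMap, hermitianForm_comm b] at hxx
  rcases eq_or_ne (𝔥 a b) 0 with hab | hab
  · exact h.fixesPoint_of_form_eq_zero hτ haxes ha hb hab
  · exact h.fixesPoint_of_form_eq_one hτ haxes (by grind)

end MapsFrame

/-! ### Every automorphism of the pairing is semilinear -/

lemma exists_isHyperbolicFrame_fin_three :
    ∃ e f : Fin 3 → Fin 6 → F4, IsHyperbolicFrame e f := by
  obtain ⟨x, -, hx, hxx⟩ := exists_isotropic_ne_zero (W := (⊤ : Submodule F4 (Fin 6 → F4)))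
    (by simp)
  obtain ⟨e, f, h, -⟩ := exists_isHyperbolicFrame hx hxx 2 (by simp)
  exact ⟨e, f, h⟩

lemma PreservesNuP.inv_mul {σ ρ : Equiv.Perm FermatPlane} (hρ : PreservesNuP ρ)
    (hσ : PreservesNuP σ) : PreservesNuP (ρ⁻¹ * σ) := by
  rw [preservesNuP_iff] at hρ hσ ⊢
  intro P Q
  rw [← hρ]
  simpa using hσ P Q

namespace MapsFrame

variable {σ : Equiv.Perm FermatPlane} {e f e' f' : Fin 3 → Fin 6 → F4}

lemma exists_ringAut (h : MapsFrame σ e f e' f') (hσ : PreservesNuP σ)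
    (h01 : MapsPoint σ (e 0 + e 1) (e' 0 + e' 1)) {w : F4} (hw0 : w ≠ 0) (hw1 : w ≠ 1) :
    ∃ φ : RingAut F4, MapsPoint σ (e 0 + w • e 1) (e' 0 + φ w • e' 1) := by
  obtain ⟨d, hd0, hd⟩ := h.exists_mapsPoint_add_smul hσ (i := 0) (j := 1) (by decide) hw0
  have hd1 : d ≠ 1 := by
    rintro rfl
    rw [one_smul] at hd
    obtain ⟨c, hc⟩ := h01.inv.exists_smul_eq hd.inv
    have hc1 : c = 1 := by simpa [h.source.symm.left_right] using congrArg (hermitianForm (f 0)) hc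
    have hcw : c = w := by simpa [h.source.symm.left_right] using congrArg (hermitianForm (f 1)) hc
    exact hw1 (hcw.symm.trans hc1)
  obtain ⟨φ, rfl⟩ := F4.exists_ringAut_apply_eq hw0 hw1 hd0 hd1
  exact ⟨φ, hd⟩

end MapsFrame

lemma PreservesNuP.exists_toPerm_eq {σ : Equiv.Perm FermatPlane} (hσ : PreservesNuP σ) :
    ∃ g : gammaU (Fin 6), MulAction.toPerm g = σ := by
  obtain ⟨w, hw0, hw1⟩ := F4.exists_ne_zero_ne_one
  obtain ⟨e, f, h⟩ := exists_isHyperbolicFrame_fin_three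
  obtain ⟨e', f', hframe, h0i⟩ := hσ.exists_mapsFrame_normalized h
  obtain ⟨φ, h0w⟩ := hframe.exists_ringAut hσ (h0i 1 (by decide)) hw0 hw1
  obtain ⟨g, hg, hge, hgf⟩ := h.exists_isSemilinearIsometry hframe.target (by simp) φ
  let γ : gammaU (Fin 6) := ⟨(φ, g), hg⟩
  have fixes {x y : Fin 6 → F4} (hxy : MapsPoint σ x y) (hgx : g x = y) :
      MapsPoint ((MulAction.toPerm γ)⁻¹ * σ) x x :=
    (hgx ▸ gammaU.mapsPoint_toPerm γ hxy.left_ne_zero hxy.left_isotropic).inv.mul hxy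
  have hfix : MapsFrame ((MulAction.toPerm γ)⁻¹ * σ) e f e f :=
    ⟨h, h, fun i => fixes (hframe.left i) (hge i), fun i => fixes (hframe.right i) (hgf i)⟩
  refine ⟨γ, inv_mul_eq_one.1 (hfix.eq_one_of_generators
    ((gammaU.preservesNuP_toPerm γ).inv_mul hσ) (fixes (h0i 1 (by decide)) ?_)
    (fixes (h0i 2 (by decide)) ?_) hw0 hw1 (fixes h0w ?_))⟩ <;>
  simp only [hg.map_add, hg.map_smul, hge]

/-! ### The kernel of the action on planes -/

lemma linearIndependent_pair_of_ne {R M α : Type*} [Ring R] [AddCommGroup M] [Module R M]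
    {v : α → M} (hv : LinearIndependent R v) {i j : α} (hij : i ≠ j) :
    LinearIndependent R ![v i, v j] := by
  have := hv.comp ![i, j] (List.nodup_ofFn.1 (by simpa using hij))
  rwa [← FinVec.map_eq] at this

namespace gammaU

variable {ι : Type*} [Fintype ι]

/-- The homothety with ratio `c`; it is an isometry because `c ^ 3 = 1`. -/
noncomputable def scalar : F4ˣ →* gammaU ι :=
  ((1 : F4ˣ →* RingAut F4).prod (MulAction.toPermHom F4ˣ (ι → F4))).codRestrict (gammaU ι) fun c =>
    { map_add := smul_add c
      map_smul := smul_comm c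
      form_map x y := by
        change 𝔥 ((c : F4) • x) ((c : F4) • y) = 𝔥 x y
        rw [map_smul, hermitianForm_smul_left, smul_eq_mul, ← mul_assoc, ← pow_succ',
          F4.pow_three c.ne_zero, one_mul] }

lemma scalar_apply (c : F4ˣ) (x : ι → F4) : (scalar c : gammaU ι).1.2 x = (c : F4) • x := rfl

lemma scalar_injective [Nonempty ι] : Function.Injective (scalar (ι := ι)) := fun c d h => by
  have hone : (c : F4) • (1 : ι → F4) = (d : F4) • (1 : ι → F4) := by
    rw [← scalar_apply, ← scalar_apply, h]
  exact Units.ext (smul_left_injective F4 (one_ne_zero (α := ι → F4)) hone)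

lemma toPerm_scalar (c : F4ˣ) :
    MulAction.toPerm (scalar c : gammaU (Fin 6)) = (1 : Equiv.Perm FermatPlane) :=
  eq_one_of_forall_mapsPoint fun _ hx hxx => (mapsPoint_toPerm (scalar c) hx hxx).of_smul_right

section TrivialAction

variable {g : gammaU (Fin 6)} {x y : Fin 6 → F4}

lemma exists_smul_eq_apply (hg : MulAction.toPerm g = (1 : Equiv.Perm FermatPlane)) (hx : x ≠ 0)
    (hxx : 𝔥 x x = 0) : ∃ c : F4, c • x = g.1.2 x :=
  exists_smul_eq_of_forall_mem hx hxx fun Q hQ => by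
    have hmap := mapsPoint_toPerm g hx hxx
    rw [hg] at hmap
    exact (hmap.mem_iff Q).1 hQ

lemma mul_eq_apply_mul_of_smul_eq_apply
    (hg : MulAction.toPerm g = (1 : Equiv.Perm FermatPlane))
    (hxy : LinearIndependent F4 ![x, y]) {t : F4} (hsum : 𝔥 (x + t • y) (x + t • y) = 0)
    {a b : F4} (ha : a • x = g.1.2 x) (hb : b • y = g.1.2 y) : t * a = g.1.1 t * b := by
  have hne : x + t • y ≠ 0 := fun h0 => one_ne_zero <|
    (LinearIndependent.pair_iff.1 hxy 1 t (by rwa [one_smul])).1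
  obtain ⟨c, hc⟩ := exists_smul_eq_apply hg hne hsum
  rw [g.2.map_add, g.2.map_smul, ← ha, ← hb, smul_add, smul_smul, smul_smul] at hc
  obtain ⟨hca, hct⟩ := hxy.eq_of_pair hc
  rw [← hct, hca, mul_comm]

variable {e f : Fin 3 → Fin 6 → F4}

lemma exists_forall_smul_eq_apply (hg : MulAction.toPerm g = (1 : Equiv.Perm FermatPlane))
    (h : IsHyperbolicFrame e f) :
    ∃ c : F4, ∀ k, c • Sum.elim e f k = g.1.2 (Sum.elim e f k) := by
  have isotropic (k : Fin 3 ⊕ Fin 3) : 𝔥 (Sum.elim e f k) (Sum.elim e f k) = 0 := by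
    rcases k with i | i
    exacts [h.left i i, h.right i i]
  have form_eq (k l : Fin 3 ⊕ Fin 3) :
      𝔥 (Sum.elim e f k) (Sum.elim e f l) = 0 ∨ 𝔥 (Sum.elim e f k) (Sum.elim e f l) = 1 := by
    rcases k with i | i <;> rcases l with j | j <;>
      simp [h.left, h.right, h.left_right, h.symm.left_right, em']
  choose c hc using fun k =>
    exists_smul_eq_apply hg (h.linearIndependent.ne_zero k) (isotropic k)
  refine ⟨c (.inl 0), fun k => ?_⟩
  rcases eq_or_ne (.inl 0) k with rfl | hk
  · exact hc _
  · have hsum := hermitianForm_add_smul_self (Sum.elim e f (.inl 0)) (Sum.elim e f k) 1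
    rw [isotropic, isotropic, one_mul] at hsum
    have := mul_eq_apply_mul_of_smul_eq_apply hg (t := 1)
      (linearIndependent_pair_of_ne h.linearIndependent hk)
      (by rcases form_eq (.inl 0) k with h | h <;> rw [hsum, h] <;> grind) (hc _) (hc k)
    rw [map_one, one_mul, one_mul] at this
    rw [this, hc]

lemma fst_eq_one_of_forall_smul_eq_apply
    (hg : MulAction.toPerm g = (1 : Equiv.Perm FermatPlane)) (h : IsHyperbolicFrame e f) {c : F4}
    (hc0 : c ≠ 0) (hc : ∀ i, c • e i = g.1.2 (e i)) : g.1.1 = 1 := by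
  refine RingEquiv.ext fun t => (mul_right_cancel₀ hc0 ?_).symm
  have hli : LinearIndependent F4 ![e 0, e 1] := linearIndependent_pair_of_ne
    h.linearIndependent (i := .inl 0) (j := .inl 1) (by decide)
  refine mul_eq_apply_mul_of_smul_eq_apply hg hli ?_ (hc 0) (hc 1)
  simp [h.left]

lemma exists_scalar_eq_of_toPerm_eq_one
    (hg : MulAction.toPerm g = (1 : Equiv.Perm FermatPlane)) : ∃ c, scalar c = g := by
  obtain ⟨e, f, h⟩ := exists_isHyperbolicFrame_fin_three
  obtain ⟨c, hc⟩ := exists_forall_smul_eq_apply hg h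
  have hc0 : c ≠ 0 := by
    rintro rfl
    refine (mapsPoint_toPerm g (h.ne_zero 0) (h.left 0 0)).right_ne_zero ?_
    simpa using (hc (.inl 0)).symm
  have hφ := fst_eq_one_of_forall_smul_eq_apply hg h hc0 fun i => hc (.inl i)
  have map_smul (a : F4) (x : Fin 6 → F4) : toLinearMap g (a • x) = a • toLinearMap g x :=
    (map_smulₛₗ _ a x).trans (congrArg (fun φ : RingAut F4 => φ a • toLinearMap g x) hφ)
  refine ⟨Units.mk0 c hc0, Subtype.ext (Prod.ext hφ.symm (Equiv.ext fun x => ?_))⟩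
  change c • x = toLinearMap g x
  have he (i : Fin 3) : toLinearMap g (e i) = c • e i := (hc (.inl i)).symm
  have hf (i : Fin 3) : toLinearMap g (f i) = c • f i := (hc (.inr i)).symm
  rw [h.eq_hyperbolicMap (by simp) x, hyperbolicMap_apply]
  simp only [map_add, map_sum, map_smul, he, hf, smul_add, Finset.smul_sum, smul_comm c]

end TrivialAction

lemma ker_toPermHom :
    (MulAction.toPermHom (gammaU (Fin 6)) FermatPlane).ker = scalar.range := by
  ext g
  refine ⟨exists_scalar_eq_of_toPerm_eq_one, ?_⟩
  rintro ⟨c, rfl⟩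
  exact toPerm_scalar c

lemma natCard_ker_toPermHom :
    Nat.card (MulAction.toPermHom (gammaU (Fin 6)) FermatPlane).ker = 3 := by
  rw [ker_toPermHom, ← Nat.card_congr (MonoidHom.ofInjective scalar_injective).toEquiv,
    Nat.card_units, F4.natCard]

end gammaU

/-! ### Counting orthonormal families -/

section Counting

variable {ι : Type*} [Fintype ι]

/-- The number of vectors `x ∈ W` with `𝔥 x x = a`. -/
noncomputable def normCount (W : Submodule F4 (ι → F4)) (a : F4) : ℕ :=
  Nat.card {x : W // 𝔥 (x : ι → F4) (x : ι → F4) = a}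

lemma bijective_add_smul_of_form_self_eq_one {W : Submodule F4 (ι → F4)} {u : ι → F4} (hu : u ∈ W)
    (huu : 𝔥 u u = 1) :
    Function.Bijective fun p : F4 × (W ⊓ perp (Submodule.span F4 {u}) : Submodule F4 (ι → F4)) =>
      (⟨p.2 + p.1 • u, W.add_mem p.2.2.1 (W.smul_mem p.1 hu)⟩ : W) := by
  refine ⟨fun p q hpq => ?_, fun x => ?_⟩
  · have form_eq (p : F4 × (W ⊓ perp (Submodule.span F4 {u}) : Submodule F4 (ι → F4))) :
        𝔥 u (p.2 + p.1 • u) = p.1 := by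
      have : 𝔥 u p.2 = 0 := p.2.2.2 u (Submodule.mem_span_singleton_self u)
      simp [huu, this]
    have hsum : (p.2 : ι → F4) + p.1 • u = q.2 + q.1 • u := congrArg Subtype.val hpq
    have hfst : p.1 = q.1 := by rw [← form_eq p, hsum, form_eq]
    exact Prod.ext hfst (Subtype.ext (add_right_cancel (hfst ▸ hsum)))
  · refine ⟨(𝔥 u x, ⟨x - 𝔥 u x • u, W.sub_mem x.2 (W.smul_mem _ hu), ?_⟩), by simp⟩
    exact mem_perp_span_iff.2 (by simp [huu])

lemma normCount_eq_add {W : Submodule F4 (ι → F4)} {u : ι → F4} (hu : u ∈ W) (huu : 𝔥 u u = 1)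
    (a : F4) :
    normCount W a = normCount (W ⊓ perp (Submodule.span F4 {u})) a +
      3 * normCount (W ⊓ perp (Submodule.span F4 {u})) (a + 1) := by
  classical
  have := Fintype.ofFinite F4
  let U := W ⊓ perp (Submodule.span F4 {u})
  have form_self (c : F4) (y : U) : 𝔥 ((y : ι → F4) + c • u) ((y : ι → F4) + c • u) = a ↔
      𝔥 (y : ι → F4) (y : ι → F4) = a + c ^ 3 := by
    have : 𝔥 u y = 0 := y.2.2 u (Submodule.mem_span_singleton_self u)
    rw [hermitianForm_add_smul_self, huu, hermitianForm_eq_zero_comm.1 this]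
    grind
  have key : normCount W a = ∑ c : F4, normCount U (a + c ^ 3) := by
    let E := Equiv.ofBijective _ (bijective_add_smul_of_form_self_eq_one hu huu)
    let P (c : F4) (y : U) : Prop := 𝔥 (y : ι → F4) (y : ι → F4) = a + c ^ 3
    have hP (p : F4 × U) : P p.1 p.2 ↔ 𝔥 (E p : ι → F4) (E p : ι → F4) = a :=
      (form_self p.1 p.2).symm
    rw [normCount, ← Nat.card_congr (E.subtypeEquiv hP),
      Nat.card_congr (Equiv.subtypeProdEquivSigmaSubtype P), Nat.card_sigma]
    rfl
  have hne (c : F4) (hc : c ∈ Finset.univ.erase 0) :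
      normCount U (a + c ^ 3) = normCount U (a + 1) := by
    rw [F4.pow_three (Finset.ne_of_mem_erase hc)]
  rw [key, ← Finset.add_sum_erase _ _ (Finset.mem_univ 0), Finset.sum_congr rfl hne,
    Finset.sum_const, Finset.card_erase_of_mem (Finset.mem_univ 0), Finset.card_univ,
    ← Nat.card_eq_fintype_card, F4.natCard, zero_pow three_ne_zero, add_zero, smul_eq_mul]

/-- Orthonormality for the hermitian form. -/
def IsOrthonormal {κ : Type*} [DecidableEq κ] (v : κ → ι → F4) : Prop :=
  ∀ i j, 𝔥 (v i) (v j) = if i = j then 1 else 0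

/-- The vectors orthogonal to every member of the family `v`. -/
noncomputable abbrev perpRange {κ : Type*} (v : κ → ι → F4) : Submodule F4 (ι → F4) :=
  perp (Submodule.span F4 (Set.range v))

lemma mem_perpRange_iff {κ : Type*} {v : κ → ι → F4} {x : ι → F4} :
    x ∈ perpRange v ↔ ∀ i, 𝔥 (v i) x = 0 :=
  mem_perp_span_iff.trans Set.forall_mem_range

variable {k : ℕ} {v : Fin k → ι → F4}

lemma isOrthonormal_cons_iff {x : ι → F4} :
    IsOrthonormal (Fin.cons x v : Fin (k + 1) → ι → F4) ↔
      IsOrthonormal v ∧ x ∈ perpRange v ∧ 𝔥 x x = 1 := by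
  simp only [IsOrthonormal, Fin.forall_fin_succ, mem_perpRange_iff, Fin.cons_zero, Fin.cons_succ,
    Fin.succ_inj, Fin.succ_ne_zero, (Fin.succ_ne_zero _).symm, if_true, if_false,
    hermitianForm_eq_zero_comm (x := x), forall_and]
  tauto

lemma perpRange_cons (v : Fin k → ι → F4) (x : ι → F4) :
    perpRange (Fin.cons x v : Fin (k + 1) → ι → F4) =
      perpRange v ⊓ perp (Submodule.span F4 {x}) := by
  ext y
  rw [Submodule.mem_inf, mem_perpRange_iff, mem_perpRange_iff, mem_perp_span_iff,
    Fin.forall_fin_succ, and_comm]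
  simp only [Fin.cons_zero, Fin.cons_succ, Set.mem_singleton_iff, forall_eq]

-- Splitting off a unit vector acts on the pair of counts by `!![1, 3; 3, 1]`, whose eigenvectors
-- are `(1, ε)` with `ε = ±1`.
lemma IsOrthonormal.normCount_top (hv : IsOrthonormal v) {ε : ℤ} (hε : ε ^ 2 = 1) :
    normCount (⊤ : Submodule F4 (ι → F4)) 0 + ε * normCount (⊤ : Submodule F4 (ι → F4)) 1 =
      (1 + 3 * ε) ^ k * (normCount (perpRange v) 0 + ε * normCount (perpRange v) 1) := by
  induction k with
  | zero =>
    have : perpRange v = ⊤ := Submodule.eq_top_iff'.2 fun _ => mem_perpRange_iff.2 fun i => i.elim0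
    rw [this, pow_zero, one_mul]
  | succ k ih =>
    obtain ⟨x, v, rfl⟩ : ∃ x w, v = Fin.cons x w := ⟨_, _, (Fin.cons_self_tail v).symm⟩
    obtain ⟨hv, hx, hxx⟩ := isOrthonormal_cons_iff.1 hv
    have h0 := normCount_eq_add hx hxx 0
    have h1 := normCount_eq_add hx hxx 1
    rw [← perpRange_cons, zero_add] at h0
    rw [← perpRange_cons, CharTwo.add_self_eq_zero] at h1
    rw [ih hv, h0, h1]
    push_cast
    linear_combination
      3 * (1 + 3 * ε) ^ k * normCount (perpRange (Fin.cons x v : Fin (k + 1) → ι → F4)) 1 *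
        -hε

lemma isOrthonormal_single [DecidableEq ι] :
    IsOrthonormal fun i : ι => (Pi.single i 1 : ι → F4) := fun i j => by
  simp only [hermitianForm_single_left, Pi.single_apply]

end Counting

section FinCounting

variable {k n : ℕ} {v : Fin k → Fin n → F4}

lemma normCount_top_add_mul {ε : ℤ} (hε : ε ^ 2 = 1) :
    normCount (⊤ : Submodule F4 (Fin n → F4)) 0 +
      ε * normCount (⊤ : Submodule F4 (Fin n → F4)) 1 = (1 + 3 * ε) ^ n := by
  have hbot : perpRange (fun i : Fin n => (Pi.single i 1 : Fin n → F4)) = ⊥ := by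
    ext x
    simp only [mem_perpRange_iff, hermitianForm_single_left, Submodule.mem_bot, funext_iff,
      Pi.zero_apply]
  have h0 : normCount (⊥ : Submodule F4 (Fin n → F4)) 0 = 1 := by
    simp [normCount]
  have h1 : normCount (⊥ : Submodule F4 (Fin n → F4)) 1 = 0 := by
    refine Nat.card_eq_zero.2 (.inl ⟨fun ⟨⟨x, hx⟩, hxx⟩ => ?_⟩)
    simp [(Submodule.mem_bot F4).1 hx] at hxx
  rw [isOrthonormal_single.normCount_top hε, hbot, h0, h1]
  simp

lemma IsOrthonormal.two_mul_normCount_perpRange (hv : IsOrthonormal v) (hk : k ≤ n) :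
    2 * (normCount (perpRange v) 1 : ℤ) = 4 ^ (n - k) - (-2) ^ (n - k) := by
  obtain ⟨m, rfl⟩ := Nat.exists_eq_add_of_le hk
  have hadd := hv.normCount_top (ε := 1) (by norm_num)
  have hsub := hv.normCount_top (ε := -1) (by norm_num)
  rw [normCount_top_add_mul (by norm_num), pow_add] at hadd hsub
  have hadd := mul_left_cancel₀ (by positivity) hadd
  have hsub := mul_left_cancel₀ (pow_ne_zero k (by norm_num)) hsub
  rw [Nat.add_sub_cancel_left]
  norm_num at hadd hsub
  linarith

variable (k n) in
/-- Orthonormal `k`-tuples in `F₄ⁿ`. -/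
def OrthonormalFamily : Type := {v : Fin k → Fin n → F4 // IsOrthonormal v}

instance : Finite (OrthonormalFamily k n) := inferInstanceAs (Finite (Subtype _))

/-- An orthonormal tuple is an orthonormal tail together with a unit vector orthogonal to it. -/
noncomputable def orthonormalFamilySuccEquiv :
    OrthonormalFamily (k + 1) n ≃
      Σ v : OrthonormalFamily k n,
        {x : perpRange v.1 // 𝔥 (x : Fin n → F4) (x : Fin n → F4) = 1} where
  toFun v :=
    have h := isOrthonormal_cons_iff.1 ((Fin.cons_self_tail v.1).symm ▸ v.2)
    ⟨⟨Fin.tail v.1, h.1⟩, ⟨v.1 0, h.2.1⟩, h.2.2⟩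
  invFun p := ⟨Fin.cons p.2.1 p.1.1, isOrthonormal_cons_iff.2 ⟨p.1.2, p.2.1.2, p.2.2⟩⟩
  left_inv v := Subtype.ext (Fin.cons_self_tail v.1)
  right_inv _ := rfl

lemma two_pow_mul_natCard_orthonormalFamily (hk : k ≤ n) :
    2 ^ k * (Nat.card (OrthonormalFamily k n) : ℤ) =
      ∏ i ∈ Finset.range k, (4 ^ (n - i) - (-2) ^ (n - i)) := by
  induction k with
  | zero =>
    have : Unique (OrthonormalFamily 0 n) :=
      ⟨⟨⟨Fin.elim0, fun i => i.elim0⟩⟩, fun _ => Subtype.ext (Subsingleton.elim _ _)⟩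
    simp
  | succ k ih =>
    have := Fintype.ofFinite (OrthonormalFamily k n)
    have hcount : (Nat.card (OrthonormalFamily (k + 1) n) : ℤ) =
        ∑ v : OrthonormalFamily k n, (normCount (perpRange v.1) 1 : ℤ) := by
      rw [Nat.card_congr orthonormalFamilySuccEquiv, Nat.card_sigma]
      push_cast
      rfl
    rw [Finset.prod_range_succ, ← ih (by omega), hcount, pow_succ, mul_assoc, Finset.mul_sum,
      Finset.sum_congr rfl fun v _ => v.2.two_mul_normCount_perpRange (by omega),
      Finset.sum_const, Finset.card_univ, ← Nat.card_eq_fintype_card, nsmul_eq_mul, mul_assoc]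

end FinCounting

/-! ### The order of the group -/

lemma IsOrthonormal.exists_isSemilinearIsometry {ι : Type*} [Fintype ι] [DecidableEq ι]
    {v : ι → ι → F4} (hv : IsOrthonormal v) (φ : RingAut F4) :
    ∃ g, IsSemilinearIsometry φ g ∧ ∀ i, g (Pi.single i 1) = v i := by
  let g (x : ι → F4) : ι → F4 := ∑ i, φ (x i) • v i
  have form_map (x y : ι → F4) : 𝔥 (g x) (g y) = φ (𝔥 x y) := by
    simp only [g, map_sum, LinearMap.sum_apply, map_smul, hermitianForm_smul_left, hv _ _]
    simp [hermitianForm_apply, mul_comm]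
  have hsingle (i : ι) : g (Pi.single i 1) = v i := by
    simp [g, Pi.single_apply, apply_ite φ]
  have hinj : Function.Injective g := fun x y hxy => funext fun i => φ.injective <| by
    rw [← hermitianForm_single_left i x, ← hermitianForm_single_left i y, ← form_map, hxy, form_map]
  refine ⟨Equiv.ofBijective g (Finite.injective_iff_bijective.1 hinj),
    ⟨fun x y => ?_, fun c x => ?_, form_map⟩, hsingle⟩
  · simp [g, add_smul, Finset.sum_add_distrib]
  · simp [g, mul_smul, Finset.smul_sum]

namespace gammaU

lemma apply_eq_sum {ι : Type*} [Fintype ι] [DecidableEq ι] (g : gammaU ι) (x : ι → F4) :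
    g.1.2 x = ∑ i, g.1.1 (x i) • g.1.2 (Pi.single i 1) := by
  change toLinearMap g x = ∑ i, g.1.1 (x i) • toLinearMap g (Pi.single i 1)
  conv_lhs => rw [pi_eq_sum_univ' x]
  simp only [map_sum, map_smulₛₗ]
  rfl

lemma isOrthonormal_apply_single {ι : Type*} [Fintype ι] [DecidableEq ι] (g : gammaU ι) :
    IsOrthonormal fun i => g.1.2 (Pi.single i 1) := fun i j => by
  rw [g.2.form_map, isOrthonormal_single i j, apply_ite g.1.1, map_one, map_zero]

/-- A semilinear isometry is determined by its field automorphism and by the orthonormal family of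
images of the standard basis vectors. -/
noncomputable def equivRingAutProd (n : ℕ) :
    gammaU (Fin n) ≃ RingAut F4 × OrthonormalFamily n n :=
  Equiv.ofBijective (fun g => (g.1.1, ⟨_, isOrthonormal_apply_single g⟩)) <| by
    refine ⟨fun g k hgk => ?_, fun ⟨φ, v, hv⟩ => ?_⟩
    · obtain ⟨hφ, hv⟩ := Prod.ext_iff.1 hgk
      have hsingle := congrFun (congrArg Subtype.val hv)
      refine Subtype.ext (Prod.ext hφ (Equiv.ext fun x => ?_))
      rw [apply_eq_sum, apply_eq_sum]
      exact Finset.sum_congr rfl fun i _ =>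
        congrArg₂ (fun (φ : RingAut F4) y => φ (x i) • y) hφ (hsingle i)
    · obtain ⟨g, hg, hgv⟩ := hv.exists_isSemilinearIsometry φ
      exact ⟨⟨(φ, g), hg⟩, Prod.ext rfl (Subtype.ext (funext hgv))⟩

lemma natCard_fin_six : Nat.card (gammaU (Fin 6)) = 2 * 82771476480 := by
  have hcard := two_pow_mul_natCard_orthonormalFamily (k := 6) (n := 6) le_rfl
  norm_num [Finset.prod_range_succ] at hcard
  rw [Nat.card_congr (equivRingAutProd 6), Nat.card_prod, F4.natCard_ringAut]
  omega

lemma range_toPermHom :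
    ((MulAction.toPermHom (gammaU (Fin 6)) FermatPlane).range : Set (Equiv.Perm FermatPlane)) =
      {σ | PreservesNuP σ} := by
  ext σ
  refine ⟨?_, PreservesNuP.exists_toPerm_eq⟩
  rintro ⟨g, rfl⟩
  exact preservesNuP_toPerm g

end gammaU

lemma natCard_preservesNuP :
    Nat.card {σ : Equiv.Perm FermatPlane // PreservesNuP σ} = 6 * 9196830720 := by
  have hindex := (MulAction.toPermHom (gammaU (Fin 6)) FermatPlane).ker.card_mul_index
  rw [Subgroup.index_ker, gammaU.natCard_ker_toPermHom, gammaU.natCard_fin_six,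
    ← SetLike.coe_sort_coe, gammaU.range_toPermHom] at hindex
  change 3 * Nat.card {σ : Equiv.Perm FermatPlane // PreservesNuP σ} = _ at hindex
  omega

lemma IsSemilinearIsometry.isGammaU {φ : RingAut F4} {g : Equiv.Perm (Fin 6 → F4)}
    (h : IsSemilinearIsometry φ g) : IsGammaU φ g := by
  refine ⟨h.map_add, h.map_smul, fun x hx => ?_⟩
  rw [← hermitianForm_self] at hx ⊢
  rw [h.form_map, hx, map_zero]

lemma FermatPoint.exists_inf_eq (p : FermatPoint) :
    ∃ P P' : FermatPlane, P.val ⊓ P'.val = p.val := by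
  obtain ⟨⟨x, hx⟩, hx0, hspan⟩ := finrank_eq_one_iff'.1 p.2.1
  have hx0 : x ≠ 0 := fun h => hx0 (Subtype.ext h)
  have hxx : 𝔥 x x = 0 := (hermitianForm_self x).trans (p.2.2 x hx)
  obtain ⟨P, P', R, R', hquad, hP, hP'⟩ := exists_isQuadrangle_mem hx0 hxx
  refine ⟨P, P', ?_⟩
  rw [inf_eq_span_singleton hquad.meetRank_left hx0 hP hP']
  refine le_antisymm ((Submodule.span_singleton_le_iff_mem x _).2 hx) fun y hy => ?_
  obtain ⟨c, hc⟩ := hspan ⟨y, hy⟩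
  exact Submodule.mem_span_singleton.2 ⟨c, congrArg Subtype.val hc⟩

/-- the natural homomorphism `ρ_P : PΓU(6,4) → Aut(P_X, ν_P)` is
an isomorphism: every `ν_P`-preserving permutation of the 891 planes is induced
by a semilinear projective transformation preserving `X` (surjectivity); such a
transformation acting trivially on all planes acts trivially on `X(F₄)`
(injectivity); and `|Aut(P_X, ν_P)| = 6·9196830720 = |PΓU(6,4)|`. -/
theorem rhoP_isomorphism :
    (∀ σ : Equiv.Perm FermatPlane, PreservesNuP σ →
      ∃ (φ : F4 ≃+* F4) (g : (Fin 6 → F4) ≃ (Fin 6 → F4)), IsGammaU φ g ∧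
        ∀ P : FermatPlane,
          ((σ P).val : Set (Fin 6 → F4)) = g '' (P.val : Set (Fin 6 → F4))) ∧
    (∀ (φ : F4 ≃+* F4) (g : (Fin 6 → F4) ≃ (Fin 6 → F4)), IsGammaU φ g →
      (∀ P : FermatPlane,
        g '' (P.val : Set (Fin 6 → F4)) = (P.val : Set (Fin 6 → F4))) →
      ∀ p : FermatPoint,
        g '' (p.val : Set (Fin 6 → F4)) = (p.val : Set (Fin 6 → F4))) ∧
    Nat.card {σ : Equiv.Perm FermatPlane // PreservesNuP σ}
      = 6 * 9196830720 := by
  refine ⟨fun σ hσ => ?_, fun φ g _ hfix p => ?_, natCard_preservesNuP⟩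
  · obtain ⟨g, rfl⟩ := hσ.exists_toPerm_eq
    exact ⟨g.1.1, g.1.2, g.2.isGammaU, fun P => gammaU.coe_mapSubmodule g P.val⟩
  · obtain ⟨P, P', hp⟩ := p.exists_inf_eq
    rw [← hp, Submodule.coe_inf, Set.image_inter g.injective, hfix, hfix]
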